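/- arXiv:2202.06711 — 4 statements merged into one kernel-verified Lean document; each statement's English description precedes it below -/
import Mathlib

section
/- Let 𝓔 be an abelian category, n ≥ 1, and M an nℤ-cluster tilting subcategory of 𝓔. Then for every object X ∈ M and every n-exact sequence Y : Y⁰ → Y¹ → ⋯ → Yⁿ → Y^{n+1} in M, the induced sequence of abelian groups 0 → Hom(X,Y⁰) → ⋯ → Hom(X,Y^{n+1}) → Extⁿ(X,Y⁰) → ⋯ → Extⁿ(X,Y^{n+1}) → Ext²ⁿ(X,Y⁰) → ⋯ is exact at every spot, where within each row the maps are induced by the differentials of Y and each connecting map Ext^{kn}(X,Y^{n+1}) → Ext^{(k+1)n}(X,Y⁰) is Yoneda composition with the class [Y] ∈ Extⁿ(Y^{n+1},Y⁰). -/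
open CategoryTheory CategoryTheory.Abelian CategoryTheory.Limits

universe w v u

namespace NZPaper

variable {C : Type u} [Category.{v} C] [Abelian C] [HasExt.{w} C]

/-- A full (iso-closed) subcategory, encoded as a set of objects, is `n`-cluster tilting if it
admits monic left approximations and epic right approximations and is characterized by the
vanishing of `Ext^i` for `1 ≤ i ≤ n-1` on either side. -/
def IsNClusterTilting (n : ℕ) (M : Set C) : Prop :=
  (∀ ⦃X Y : C⦄, (X ≅ Y) → X ∈ M → Y ∈ M) ∧
  (∀ E : C, ∃ (X : C) (f : E ⟶ X), X ∈ M ∧ Mono f ∧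
      ∀ X' ∈ M, ∀ g : E ⟶ X', ∃ h : X ⟶ X', f ≫ h = g) ∧
  (∀ E : C, ∃ (X : C) (f : X ⟶ E), X ∈ M ∧ Epi f ∧
      ∀ X' ∈ M, ∀ g : X' ⟶ E, ∃ h : X' ⟶ X, h ≫ f = g) ∧
  (∀ E : C, E ∈ M ↔ ∀ Y ∈ M, ∀ i : ℕ, 1 ≤ i → i < n → ∀ e : Ext E Y i, e = 0) ∧
  (∀ E : C, E ∈ M ↔ ∀ Y ∈ M, ∀ i : ℕ, 1 ≤ i → i < n → ∀ e : Ext Y E i, e = 0)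

/-- An `nℤ`-cluster tilting subcategory: in addition `Ext^k` vanishes on `M` for every
`k ≥ 1` not divisible by `n`. -/
def IsNZClusterTilting (n : ℕ) (M : Set C) : Prop :=
  IsNClusterTilting n M ∧
  ∀ X ∈ M, ∀ Y ∈ M, ∀ k : ℕ, 1 ≤ k → ¬ (n ∣ k) → ∀ e : Ext X Y k, e = 0

/-- An exact sequence `0 → Y 0 → Y 1 → ⋯ → Y m → Y (m+1) → 0` in an abelian category,
recorded together with its canonical splicing into short exact sequences
`0 → K i → Y (i+1) → K (i+1) → 0` (`K i` is the image of `d i` for `1 ≤ i ≤ m`,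
`K 0 = Y 0` and `K m = Y (m+1)`).  Only the indices `0, …, m+1` (resp. `0, …, m`) of
`Y` (resp. of the differentials and of `K`) are relevant; the remaining values are junk
(any such exact sequence can be padded by zero objects). -/
structure ExactExtension (C : Type u) [Category.{v} C] [Abelian C] (m : ℕ) where
  Y : ℕ → C
  d : ∀ i, Y i ⟶ Y (i + 1)
  K : ℕ → C
  ι : ∀ i, K i ⟶ Y (i + 1)
  π : ∀ i, Y i ⟶ K i
  hK0 : K 0 = Y 0
  hKm : K m = Y (m + 1)
  zero : ∀ i, ι i ≫ π (i + 1) = 0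
  shortExact : ∀ i, (ShortComplex.mk (ι i) (π (i + 1)) (zero i)).ShortExact
  d0_eq : eqToHom hK0 ≫ d 0 = ι 0
  dmid_eq : ∀ i, 1 ≤ i → i + 1 ≤ m → d i = π i ≫ ι i
  dlast_eq : d m = π m ≫ eqToHom hKm

/-- The Yoneda class of the chain of the first `j` short exact sequences,
obtained as the Yoneda composite of their `Ext¹`-classes. -/
noncomputable def ExactExtension.chainClass {m : ℕ} (T : ExactExtension C m) :
    ∀ j : ℕ, Ext (T.K j) (T.K 0) j
  | 0 => Ext.mk₀ (𝟙 _)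
  | (j + 1) => ((T.shortExact j).extClass).comp (T.chainClass j) (by omega)

/-- The Yoneda class `[ξ] ∈ Ext^m (Y (m+1)) (Y 0)` of the exact sequence
`0 → Y 0 → ⋯ → Y (m+1) → 0`, i.e. the Yoneda composite of the `Ext¹`-classes of the
short exact sequences obtained by splicing it at its images. -/
noncomputable def ExactExtension.extClass {m : ℕ} (T : ExactExtension C m) :
    Ext (T.Y (m + 1)) (T.Y 0) m :=
  (Ext.mk₀ (eqToHom T.hKm.symm)).comp
    ((T.chainClass m).comp (Ext.mk₀ (eqToHom T.hK0)) (add_zero m)) (zero_add m)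

/-- Transport of an `Ext`-class along equalities of objects. -/
noncomputable def extTransport {X X' Z Z' : C} {a : ℕ} (e : Ext X Z a)
    (hX : X = X') (hZ : Z = Z') : Ext X' Z' a :=
  (Ext.mk₀ (eqToHom hX.symm)).comp (e.comp (Ext.mk₀ (eqToHom hZ)) (add_zero a)) (zero_add a)

/-- Exactness, at every spot, of the long sequence of abelian groups
`0 → Hom(X,Y⁰) → ⋯ → Hom(X,Y^{n+1}) → Extⁿ(X,Y⁰) → ⋯ → Extⁿ(X,Y^{n+1}) → Ext^{2n}(X,Y⁰) → ⋯`
(`Ext⁰ = Hom`), where within each row the maps are induced by the differentials of `T` and each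
connecting map `Ext^{kn}(X,Y^{n+1}) → Ext^{(k+1)n}(X,Y⁰)` is Yoneda composition with the class
`[T] ∈ Extⁿ(Y^{n+1},Y⁰)`. -/
def CovLES (n : ℕ) (X : C) (T : ExactExtension C n) : Prop :=
  (Function.Injective fun e : Ext X (T.Y 0) 0 => e.comp (Ext.mk₀ (T.d 0)) (add_zero 0)) ∧
  (∀ k i : ℕ, i < n → Function.Exact
      (fun e : Ext X (T.Y i) (k * n) => e.comp (Ext.mk₀ (T.d i)) (add_zero _))
      (fun e : Ext X (T.Y (i + 1)) (k * n) => e.comp (Ext.mk₀ (T.d (i + 1))) (add_zero _))) ∧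
  (∀ k : ℕ, Function.Exact
      (fun e : Ext X (T.Y n) (k * n) => e.comp (Ext.mk₀ (T.d n)) (add_zero _))
      (fun e : Ext X (T.Y (n + 1)) (k * n) =>
        e.comp T.extClass (show k * n + n = (k + 1) * n by ring))) ∧
  (∀ k : ℕ, Function.Exact
      (fun e : Ext X (T.Y (n + 1)) (k * n) =>
        e.comp T.extClass (show k * n + n = (k + 1) * n by ring))
      (fun e : Ext X (T.Y 0) ((k + 1) * n) => e.comp (Ext.mk₀ (T.d 0)) (add_zero _)))

/-- Exactness, at every spot, of the long sequence of abelian groups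
`0 → Hom(Y^{n+1},Z) → ⋯ → Hom(Y⁰,Z) → Extⁿ(Y^{n+1},Z) → ⋯ → Extⁿ(Y⁰,Z) → Ext^{2n}(Y^{n+1},Z) → ⋯`
(`Ext⁰ = Hom`), where within each row the maps are induced by the differentials of `T` and each
connecting map `Ext^{kn}(Y⁰,Z) → Ext^{(k+1)n}(Y^{n+1},Z)` is Yoneda precomposition with the class
`[T] ∈ Extⁿ(Y^{n+1},Y⁰)`. -/
def ContraLES (n : ℕ) (Z : C) (T : ExactExtension C n) : Prop :=
  (Function.Injective fun e : Ext (T.Y (n + 1)) Z 0 => (Ext.mk₀ (T.d n)).comp e (zero_add 0)) ∧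
  (∀ k i : ℕ, i < n → Function.Exact
      (fun e : Ext (T.Y (i + 2)) Z (k * n) => (Ext.mk₀ (T.d (i + 1))).comp e (zero_add _))
      (fun e : Ext (T.Y (i + 1)) Z (k * n) => (Ext.mk₀ (T.d i)).comp e (zero_add _))) ∧
  (∀ k : ℕ, Function.Exact
      (fun e : Ext (T.Y 1) Z (k * n) => (Ext.mk₀ (T.d 0)).comp e (zero_add _))
      (fun e : Ext (T.Y 0) Z (k * n) =>
        T.extClass.comp e (show n + k * n = (k + 1) * n by ring))) ∧
  (∀ k : ℕ, Function.Exact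
      (fun e : Ext (T.Y 0) Z (k * n) =>
        T.extClass.comp e (show n + k * n = (k + 1) * n by ring))
      (fun e : Ext (T.Y (n + 1)) Z ((k + 1) * n) => (Ext.mk₀ (T.d n)).comp e (zero_add _)))

end NZPaper

/-!
Splice `Y` into short exact sequences `0 → K i → Y (i+1) → K (i+1) → 0`. Every `Ext^a(X, Y i)` with
`n ∤ a` vanishes, so the connecting maps `Ext^a(X, K (i+1)) → Ext^{a+1}(X, K i)` are injective if
`n ∤ a` and surjective if `n ∤ a + 1`. Shifting degrees along them identifies the kernel and the
image of composition with `[Y]`. It also shows that, when `n ∣ a`, `Ext^a(X, Y i) → Ext^a(X, K i)`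
is surjective for `i < n` and `Ext^a(X, K i) → Ext^a(X, Y (i+1))` is injective for `1 ≤ i ≤ n`, so
that each row inherits its exactness from that of `Ext^a(X, -)` on the short exact sequences.
-/

namespace NZPaper

section Exact

variable {A B D : Type*} {f : A → B}

lemma exact_comp_of_surjective {E : Type*} [Zero D] {g : B → D} {p : E → A}
    (h : Function.Exact f g) (hp : Function.Surjective p) : Function.Exact (f ∘ p) g :=
  fun y ↦ by rw [hp.range_comp, h y]

lemma injective_of_exact_of_subsingleton [Subsingleton A] [AddGroup B] [AddGroup D] {g : B →+ D}
    (h : Function.Exact f g) : Function.Injective g :=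
  (injective_iff_map_eq_zero g).2 fun y hy ↦
    Set.subsingleton_range f ((h y).1 hy) ((h 0).1 (map_zero g))

lemma surjective_of_exact_of_subsingleton [Zero D] [Subsingleton D] {g : B → D}
    (h : Function.Exact f g) : Function.Surjective f :=
  fun y ↦ (h y).1 (Subsingleton.elim _ _)

end Exact

lemma not_dvd_add_of_pos_of_lt {n a r : ℕ} (ha : n ∣ a) (hr : 0 < r) (hrn : r < n) :
    ¬ n ∣ a + r :=
  (Nat.dvd_add_right ha).not.2 (Nat.not_dvd_of_pos_of_lt hr hrn)

section Postcomp

variable {C : Type u} [Category.{v} C] [Abelian C] [HasExt.{w} C] {X Y Z : C}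

lemma postcomp_mk₀_comp (f : Y ⟶ Z) (g : Z ⟶ W) (a : ℕ) :
    (Ext.mk₀ (f ≫ g)).postcomp X (add_zero a) =
      ((Ext.mk₀ g).postcomp X (add_zero a)).comp ((Ext.mk₀ f).postcomp X (add_zero a)) := by
  ext e
  simp

lemma bijective_postcomp_mk₀ (f : Y ⟶ Z) [IsIso f] (a : ℕ) :
    Function.Bijective ((Ext.mk₀ f).postcomp X (add_zero a)) :=
  ConcreteCategory.bijective_of_isIso ((extFunctorObj X a).map f)

variable {S : ShortComplex C} (hS : S.ShortExact)

include hS in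
lemma exact_postcomp_f_g (a : ℕ) :
    Function.Exact ((Ext.mk₀ S.f).postcomp X (add_zero a))
      ((Ext.mk₀ S.g).postcomp X (add_zero a)) :=
  (ShortComplex.ab_exact_iff_function_exact _).1 (Ext.covariant_sequence_exact₂' X hS a)

lemma exact_postcomp_g_extClass {a b : ℕ} (h : a + 1 = b) :
    Function.Exact ((Ext.mk₀ S.g).postcomp X (add_zero a)) (hS.extClass.postcomp X h) :=
  (ShortComplex.ab_exact_iff_function_exact _).1 (Ext.covariant_sequence_exact₃' X hS a b h)

lemma exact_postcomp_extClass_f {a b : ℕ} (h : a + 1 = b) :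
    Function.Exact (hS.extClass.postcomp X h) ((Ext.mk₀ S.f).postcomp X (add_zero b)) :=
  (ShortComplex.ab_exact_iff_function_exact _).1 (Ext.covariant_sequence_exact₁' X hS a b h)

end Postcomp

namespace ExactExtension

variable {C : Type u} [Category.{v} C] [Abelian C] {n : ℕ} (T : ExactExtension C n)

/-- The epimorphism of `Y i` onto the image `K i` of `d i`, for `i ≤ n`. The field `π 0` is junk, so
that at `0` it is the identification of `Y 0` with `K 0`. -/
def toImage : ∀ i, T.Y i ⟶ T.K i
  | 0 => eqToHom T.hK0.symm
  | i + 1 => T.π (i + 1)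

/-- The inclusion of the image `K i` of `d i` into `Y (i + 1)`, for `i ≤ n`. The field `ι n` is
junk, so that at `n` it is the identification of `K n` with `Y (n + 1)`. -/
def fromImage (i : ℕ) : T.K i ⟶ T.Y (i + 1) :=
  if h : i = n then eqToHom (by rw [h, T.hKm]) else T.ι i

lemma d_eq_toImage_comp_ι : ∀ {i : ℕ}, i < n → T.d i = T.toImage i ≫ T.ι i
  | 0, _ => by simp [toImage, ← T.d0_eq]
  | i + 1, hi => T.dmid_eq (i + 1) (by lia) hi

lemma d_eq_π_comp_fromImage {i : ℕ} (hi : 1 ≤ i) (hin : i ≤ n) :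
    T.d i = T.π i ≫ T.fromImage i := by
  obtain rfl | hin := hin.eq_or_lt
  · simpa [fromImage] using T.dlast_eq
  · simpa [fromImage, hin.ne] using T.dmid_eq i hi hin

variable [HasExt.{w} C] {X : C}

lemma postcomp_chainClass_succ (j : ℕ) {a b : ℕ} (h : a + (j + 1) = b) :
    (T.chainClass (j + 1)).postcomp X h =
      ((T.chainClass j).postcomp X (show a + 1 + j = b by lia)).comp
        ((T.shortExact j).extClass.postcomp X rfl) := by
  ext e
  exact (Ext.comp_assoc e _ _ rfl _ (by lia)).symm

lemma postcomp_extClass_comp_hKm {a b : ℕ} (h : a + n = b) :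
    (T.extClass.postcomp X h).comp ((Ext.mk₀ (eqToHom T.hKm)).postcomp X (add_zero a)) =
      ((Ext.mk₀ (eqToHom T.hK0)).postcomp X (add_zero b)).comp
        ((T.chainClass n).postcomp X h) := by
  ext e
  simp [extClass]

lemma injective_postcomp_chainClass (j : ℕ) {a b : ℕ} (hb : a + j = b)
    (hY : ∀ p q, p + q = j → 1 ≤ p → Subsingleton (Ext X (T.Y p) (a + q))) :
    Function.Injective ((T.chainClass j).postcomp X hb) := by
  induction j generalizing a with
  | zero =>
    obtain rfl : a = b := hb
    exact (bijective_postcomp_mk₀ (𝟙 _) a).injective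
  | succ j ih =>
    have : Subsingleton (Ext X (T.Y (j + 1)) a) := hY (j + 1) 0 rfl (by lia)
    rw [postcomp_chainClass_succ, AddMonoidHom.coe_comp]
    refine (ih (by lia) fun p q hpq hp ↦ ?_).comp
      (injective_of_exact_of_subsingleton (exact_postcomp_g_extClass (T.shortExact j) rfl))
    simpa only [add_assoc, add_comm 1] using hY p (q + 1) (by lia) hp

lemma exact_π_chainClass {j : ℕ} (hj : 1 ≤ j) {a b : ℕ} (hb : a + j = b)
    (hY : ∀ p q, p + q = j → 1 ≤ p → 1 ≤ q → Subsingleton (Ext X (T.Y p) (a + q))) :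
    Function.Exact ((Ext.mk₀ (T.π j)).postcomp X (add_zero a))
      ((T.chainClass j).postcomp X hb) := by
  obtain ⟨j, rfl⟩ := Nat.exists_eq_add_of_le' hj
  rw [postcomp_chainClass_succ, AddMonoidHom.coe_comp]
  refine (exact_postcomp_g_extClass (T.shortExact j) rfl).comp_injective _
    (T.injective_postcomp_chainClass j (by lia) fun p q hpq hp ↦ ?_) (map_zero _)
  simpa only [add_assoc, add_comm 1] using hY p (q + 1) (by lia) hp (by lia)

lemma exact_chainClass_ι {j : ℕ} (hj : 1 ≤ j) {a b : ℕ} (hb : a + j = b)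
    (hY : ∀ p q, p + q = j + 1 → 2 ≤ p → 1 ≤ q → Subsingleton (Ext X (T.Y p) (a + q))) :
    Function.Exact ((T.chainClass j).postcomp X hb)
      ((Ext.mk₀ (T.ι 0)).postcomp X (add_zero b)) := by
  induction j, hj using Nat.le_induction generalizing a with
  | base =>
    simpa [chainClass] using exact_postcomp_extClass_f (X := X) (T.shortExact 0) hb
  | succ j hj ih =>
    have : Subsingleton (Ext X (T.Y (j + 1)) (a + 1)) := hY (j + 1) 1 rfl (by lia) le_rfl
    rw [postcomp_chainClass_succ, AddMonoidHom.coe_comp]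
    refine exact_comp_of_surjective (ih (by lia) fun p q hpq hp _ ↦ ?_)
      (surjective_of_exact_of_subsingleton (exact_postcomp_extClass_f (T.shortExact j) rfl))
    simpa only [add_assoc, add_comm 1] using hY p (q + 1) (by lia) hp (by lia)

lemma subsingleton_ext_K_of_Y_le (j a : ℕ)
    (hY : ∀ p q, p + q = j → Subsingleton (Ext X (T.Y p) (a + q))) :
    Subsingleton (Ext X (T.K j) a) := by
  have : Subsingleton (Ext X (T.Y 0) (a + j)) := hY 0 j (zero_add j)
  have : Subsingleton (Ext X (T.K 0) (a + j)) :=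
    (bijective_postcomp_mk₀ (eqToHom T.hK0) _).injective.subsingleton
  exact (T.injective_postcomp_chainClass j rfl fun p q hpq _ ↦ hY p q hpq).subsingleton

lemma subsingleton_ext_K_of_Y_gt {j l : ℕ} (hj : j + l = n) (a : ℕ)
    (hY : ∀ p q, p + q = n + 1 → j < p → Subsingleton (Ext X (T.Y p) (a + q))) :
    Subsingleton (Ext X (T.K j) (a + l)) := by
  induction l generalizing j with
  | zero =>
    obtain rfl : j = n := hj
    have : Subsingleton (Ext X (T.Y (j + 1)) a) := hY (j + 1) 0 rfl j.lt_succ_self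
    exact (bijective_postcomp_mk₀ (eqToHom T.hKm) a).injective.subsingleton
  | succ l ih =>
    have : Subsingleton (Ext X (T.Y (j + 1)) (a + (l + 1))) :=
      hY (j + 1) (l + 1) (by lia) j.lt_succ_self
    have : Subsingleton (Ext X (T.K (j + 1)) (a + l)) :=
      ih (by lia) fun p q hpq hp ↦ hY p q hpq (by lia)
    exact (injective_of_exact_of_subsingleton
      (exact_postcomp_extClass_f (T.shortExact j) (add_assoc a l 1))).subsingleton

section Vanishing

variable (hT : ∀ i ≤ n + 1, ∀ a : ℕ, ¬ n ∣ a → Subsingleton (Ext X (T.Y i) a)) {a : ℕ} (ha : n ∣ a)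
include hT ha

lemma surjective_postcomp_toImage {i : ℕ} (hi : i < n) :
    Function.Surjective ((Ext.mk₀ (T.toImage i)).postcomp X (add_zero a)) := by
  cases i with
  | zero => exact (bijective_postcomp_mk₀ (eqToHom T.hK0.symm) a).surjective
  | succ i =>
    have : Subsingleton (Ext X (T.K i) (a + 1)) :=
      T.subsingleton_ext_K_of_Y_le i (a + 1) fun p q hpq ↦ hT p (by lia) _ <| by
        rw [add_assoc]
        exact not_dvd_add_of_pos_of_lt ha (by lia) (by lia)
    exact surjective_of_exact_of_subsingleton (exact_postcomp_g_extClass (T.shortExact i) rfl)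

lemma injective_postcomp_fromImage {i : ℕ} (hi : 1 ≤ i) (hin : i ≤ n) :
    Function.Injective ((Ext.mk₀ (T.fromImage i)).postcomp X (add_zero a)) := by
  obtain rfl | hin := hin.eq_or_lt
  · simpa [fromImage] using (bijective_postcomp_mk₀ (X := X) (eqToHom T.hKm) a).injective
  rw [fromImage, dif_neg hin.ne]
  obtain rfl | ha0 := a.eq_zero_or_pos
  · have : Mono (T.ι i) := (T.shortExact i).mono_f
    exact Ext.postcomp_mk₀_injective_of_mono X (T.ι i)
  obtain ⟨c, rfl⟩ := Nat.exists_eq_add_of_le' (Nat.le_of_dvd ha0 ha)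
  obtain ⟨l, hl⟩ := Nat.exists_eq_add_of_lt hin
  have : Subsingleton (Ext X (T.K (i + 1)) (c + i + l)) :=
    T.subsingleton_ext_K_of_Y_gt (by lia) (c + i) fun p q hpq hp ↦ hT p (by lia) _ <| by
      rw [add_assoc]
      exact not_dvd_add_of_pos_of_lt ((Nat.dvd_add_left dvd_rfl).1 ha) (by lia) (by lia)
  exact injective_of_exact_of_subsingleton
    (exact_postcomp_extClass_f (T.shortExact i) (show c + i + l + 1 = c + n by lia))

lemma exact_d_d {i : ℕ} (hi : i < n) :
    Function.Exact ((Ext.mk₀ (T.d i)).postcomp X (add_zero a))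
      ((Ext.mk₀ (T.d (i + 1))).postcomp X (add_zero a)) := by
  rw [T.d_eq_toImage_comp_ι hi, T.d_eq_π_comp_fromImage (by lia) hi, postcomp_mk₀_comp,
    postcomp_mk₀_comp, AddMonoidHom.coe_comp, AddMonoidHom.coe_comp]
  exact exact_comp_of_surjective
    ((exact_postcomp_f_g (T.shortExact i) a).comp_injective _
      (T.injective_postcomp_fromImage hT ha (by lia) hi) (map_zero _))
    (T.surjective_postcomp_toImage hT ha hi)

lemma exact_d_extClass (hn : 1 ≤ n) {b : ℕ} (hb : a + n = b) :
    Function.Exact ((Ext.mk₀ (T.d n)).postcomp X (add_zero a)) (T.extClass.postcomp X hb) := by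
  refine (AddMonoidHom.exact_iff_of_surjective_of_bijective_of_injective
    ((Ext.mk₀ (T.π n)).postcomp X (add_zero a)) ((T.chainClass n).postcomp X hb) _ _
    (.id _) ((Ext.mk₀ (eqToHom T.hKm)).postcomp X (add_zero a))
    ((Ext.mk₀ (eqToHom T.hK0)).postcomp X (add_zero b)) ?_ (T.postcomp_extClass_comp_hKm hb)
    Function.surjective_id (bijective_postcomp_mk₀ _ a)
    (bijective_postcomp_mk₀ _ b).injective).1 ?_
  · rw [T.dlast_eq, postcomp_mk₀_comp, AddMonoidHom.comp_id]
  · exact T.exact_π_chainClass hn hb fun p q hpq hp hq ↦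
      hT p (by lia) _ (not_dvd_add_of_pos_of_lt ha hq (by lia))

lemma exact_extClass_d (hn : 1 ≤ n) {b : ℕ} (hb : a + n = b) :
    Function.Exact (T.extClass.postcomp X hb) ((Ext.mk₀ (T.d 0)).postcomp X (add_zero b)) := by
  refine (AddMonoidHom.exact_iff_of_surjective_of_bijective_of_injective
    ((T.chainClass n).postcomp X hb) ((Ext.mk₀ (T.ι 0)).postcomp X (add_zero b)) _ _
    ((Ext.mk₀ (eqToHom T.hKm)).postcomp X (add_zero a))
    ((Ext.mk₀ (eqToHom T.hK0)).postcomp X (add_zero b)) (.id _) (T.postcomp_extClass_comp_hKm hb)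
    ?_ (bijective_postcomp_mk₀ _ a).surjective (bijective_postcomp_mk₀ _ b)
    Function.injective_id).1 ?_
  · rw [← T.d0_eq, postcomp_mk₀_comp, AddMonoidHom.id_comp]
  · exact T.exact_chainClass_ι hn hb fun p q hpq hp hq ↦
      hT p (by lia) _ (not_dvd_add_of_pos_of_lt ha hq (by lia))

end Vanishing

end ExactExtension

theorem covariant_les_of_nZ_cluster_tilting_general
    {C : Type u} [Category.{v} C] [Abelian C] [HasExt.{w} C]
    (n : ℕ) (hn : 1 ≤ n) (X : C) (T : ExactExtension C n)
    (hT : ∀ i ≤ n + 1, ∀ a : ℕ, ¬ n ∣ a → Subsingleton (Ext X (T.Y i) a)) :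
    CovLES n X T := by
  have hdvd (k : ℕ) : n ∣ k * n := Dvd.intro_left k rfl
  have : Mono (T.ι 0) := (T.shortExact 0).mono_f
  have : Mono (T.d 0) := by
    rw [T.d_eq_toImage_comp_ι hn, ExactExtension.toImage]
    infer_instance
  exact ⟨Ext.postcomp_mk₀_injective_of_mono X (T.d 0),
    fun k _ hi ↦ T.exact_d_d hT (hdvd k) hi,
    fun k ↦ T.exact_d_extClass hT (hdvd k) hn (by ring),
    fun k ↦ T.exact_extClass_d hT (hdvd k) hn (by ring)⟩

/-- Let `𝓔` be an abelian category, `n ≥ 1`, and `M` an `nℤ`-cluster tilting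
subcategory of `𝓔`.  Then for every `X ∈ M` and every `n`-exact sequence
`Y : Y⁰ → Y¹ → ⋯ → Yⁿ → Y^{n+1}` in `M` the induced long sequence of abelian groups
`0 → Hom(X,Y⁰) → ⋯ → Hom(X,Y^{n+1}) → Extⁿ(X,Y⁰) → ⋯ → Extⁿ(X,Y^{n+1}) → Ext^{2n}(X,Y⁰) → ⋯`
is exact at every spot. -/
theorem covariant_les_of_nZ_cluster_tilting
    {C : Type u} [Category.{v} C] [Abelian C] [HasExt.{w} C]
    (n : ℕ) (hn : 1 ≤ n) (M : Set C) (hM : IsNZClusterTilting n M)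
    (X : C) (hX : X ∈ M)
    (T : ExactExtension C n) (hT : ∀ i ≤ n + 1, T.Y i ∈ M) :
    CovLES n X T :=
  covariant_les_of_nZ_cluster_tilting_general n hn X T fun i hi a ha ↦
    subsingleton_of_forall_eq 0
      (hM.2 X hX _ (hT i hi) a (Nat.pos_of_ne_zero (by rintro rfl; exact ha (dvd_zero n))) ha)

end NZPaper
end

section
/- Let 𝓔 be an abelian category, n ≥ 1, and M an n-cluster tilting subcategory of 𝓔. Suppose that for every object X ∈ M and every n-exact sequence Y : Y⁰ → Y¹ → ⋯ → Yⁿ → Y^{n+1} in M, the induced sequence of abelian groups 0 → Hom(X,Y⁰) → ⋯ → Hom(X,Y^{n+1}) → Extⁿ(X,Y⁰) → ⋯ → Extⁿ(X,Y^{n+1}) → Ext²ⁿ(X,Y⁰) → ⋯ is exact at every spot (maps within each row induced by the differentials of Y, and each connecting map Ext^{kn}(X,Y^{n+1}) → Ext^{(k+1)n}(X,Y⁰) given by Yoneda composition with [Y] ∈ Extⁿ(Y^{n+1},Y⁰)). Then M is an nℤ-cluster tilting subcategory, i.e., Ext^k(X,Y)=0 for all X,Y ∈ M and all k ≥ 1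 not divisible by n. -/
open CategoryTheory CategoryTheory.Abelian CategoryTheory.Limits

universe w v u

namespace NZPaper

/-!
Every `e : Ext X Y k` with `k ≥ 1` is killed by a monomorphism from `Y`, hence by one `Y → A` with
`A ∈ M`. Continuing with monic left `M`-approximations embeds `Y → A` into an `n`-exact sequence
`Y = Y⁰ → A = Y¹ → ⋯ → Yⁿ⁺¹` of `M`, with cosyzygies `K⁰, …, Kⁿ`. Write `k = q * n + r` with
`0 < r < n`; for `q = 0` the claim is rigidity, and for `q ≥ 1` one argues by induction on `k`.
The groups `Ext^(k-j)(X, Y^(j+1))` with `1 ≤ j ≤ n` and `j ≠ r` vanish by induction, so dimension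
shifting to the left of `j = r` writes `e` as the composite of some `f : Ext^(q*n)(X, K^r)` with
the Yoneda class of the first `r` short exact sequences, and dimension shifting to the right of
`j = r` gives `Ext^(q*n-1)(X, K^(r+1)) = 0`. The vanishing of the latter group and exactness of the
row at `Ext^(q*n)(X, Y^(r+1))` lift `f` along `Y^r → K^r`, and the composite of `Y^r → K^r` with
the Yoneda class is zero.
-/

section Effaceability

open DerivedCategory

variable {C : Type u} [Category.{v} C] [Abelian C]

lemma mono_f_of_mono_homologyMap {ι : Type*} {c : ComplexShape ι} {K L : HomologicalComplex C c}
    (φ : K ⟶ L) {i j k : ι} (hi : c.prev j = i) (hk : c.next j = k)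
    (hL : L.d i j = 0) (hKi : K.d i j = 0) (hKk : K.d j k = 0)
    [Mono (HomologicalComplex.homologyMap φ j)] : Mono (φ.f j) := by
  have := K.isIso_iCycles j k hk hKk
  have := K.isIso_homologyπ i j hi hKi
  have := L.isIso_homologyπ i j hi hL
  have h : φ.f j = inv (K.iCycles j) ≫ K.homologyπ j ≫ HomologicalComplex.homologyMap φ j ≫
      inv (L.homologyπ j) ≫ L.iCycles j := by simp
  rw [h]
  infer_instance

lemma exists_mono_comp_single_map_eq_zero [HasDerivedCategory.{w} C]
    {K : CochainComplex C ℤ} {Y : C} {i n : ℤ} (hin : i < n) [K.IsStrictlyGE n]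
    (φ : Q.obj K ⟶ Q.obj ((HomologicalComplex.single C (.up ℤ) i).obj Y)) :
    ∃ (E : C) (α : Y ⟶ E), Mono α ∧
      φ ≫ Q.map ((HomologicalComplex.single C (.up ℤ) i).map α) = 0 := by
  have : CochainComplex.IsStrictlyGE ((HomologicalComplex.single C (.up ℤ) i).obj Y) i :=
    inferInstanceAs (((CochainComplex.singleFunctor C i).obj Y).IsStrictlyGE i)
  obtain ⟨L, _, g, s, hs, rfl⟩ := left_fac_of_isStrictlyGE φ i
  have hL (j : ℤ) (hj : j + 1 = i) : IsZero (L.X j) := L.isZero_of_isStrictlyGE i j (by lia)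
  have : Mono (s.f i) := by
    rw [isIso_Q_map_iff_quasiIso] at hs
    exact mono_f_of_mono_homologyMap s (CochainComplex.prev _ _) rfl
      ((hL _ (by simp)).eq_of_src _ _) (by simp) (by simp)
  -- `L` starts in degree `i` and `K` vanishes there, so projecting the left fraction `g / s` onto
  -- `L.X i` gives zero.
  let α : Y ⟶ L.X i := (HomologicalComplex.singleObjXSelf _ i Y).inv ≫ s.f i
  let ρ : L ⟶ (HomologicalComplex.single C (.up ℤ) i).obj (L.X i) :=
    HomologicalComplex.mkHomToSingle (𝟙 _) fun j hj ↦ (hL j hj).eq_of_src _ _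
  have hsρ : s ≫ ρ = (HomologicalComplex.single C (.up ℤ) i).map α := by
    apply HomologicalComplex.to_single_hom_ext
    simp [ρ, α, HomologicalComplex.single_map_f_self]
  have hgρ : g ≫ ρ = 0 :=
    HomologicalComplex.to_single_hom_ext ((K.isZero_of_isStrictlyGE n i hin).eq_of_src _ _)
  refine ⟨L.X i, α, inferInstance, ?_⟩
  rw [← hsρ, Q.map_comp, Category.assoc, IsIso.inv_hom_id_assoc, ← Q.map_comp, hgρ, Q.map_zero]

lemma exists_mono_comp_mk₀_eq_zero [HasExt.{w} C] {X Y : C} {n : ℕ} (e : Ext X Y (n + 1)) :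
    ∃ (E : C) (α : Y ⟶ E), Mono α ∧ e.comp (Ext.mk₀ α) (add_zero _) = 0 := by
  let := HasDerivedCategory.standard C
  let shiftIso := (singleFunctors C).shiftIso (n + 1 : ℤ) (-(n + 1)) 0 (by lia)
  obtain ⟨E, α, hα, h⟩ := exists_mono_comp_single_map_eq_zero
    (K := (CochainComplex.singleFunctor C 0).obj X) (i := -(n + 1 : ℤ)) (n := 0) (by lia)
    (e.hom ≫ shiftIso.hom.app Y)
  refine ⟨E, α, hα, Ext.ext ?_⟩
  rw [← Ext.hom_comp_singleFunctor_map_shift, Ext.zero_hom, ← cancel_mono (shiftIso.hom.app E),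
    zero_comp, Category.assoc]
  exact (e.hom ≫= shiftIso.hom.naturality α).trans ((Category.assoc _ _ _).symm.trans h)

end Effaceability

namespace ExactExtension

variable {C : Type u} [Category.{v} C] [Abelian C] {m : ℕ}

lemma ι_comp_d (T : ExactExtension C m) {i : ℕ} (hi : i < m) : T.ι i ≫ T.d (i + 1) = 0 := by
  rcases Nat.lt_or_eq_of_le (Nat.succ_le_of_lt hi) with h | rfl
  · rw [T.dmid_eq (i + 1) (by lia) h, reassoc_of% T.zero i, zero_comp]
  · rw [T.dlast_eq, reassoc_of% T.zero i, zero_comp]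

section DimensionShifting

variable [HasExt.{w} C] (T : ExactExtension C m) {X : C}

/-- Exactness at `Ext^a(X, Y^{i+1})` of the row `Ext^a(X, Y⁰) → ⋯ → Ext^a(X, Y^{m+1})` induced
by the differentials of `T`. -/
def RowExactAt (X : C) (a i : ℕ) : Prop :=
  Function.Exact
    (fun e : Ext X (T.Y i) a => e.comp (Ext.mk₀ (T.d i)) (add_zero _))
    (fun e : Ext X (T.Y (i + 1)) a => e.comp (Ext.mk₀ (T.d (i + 1))) (add_zero _))

lemma mk₀_π_comp_chainClass (j : ℕ) :
    (Ext.mk₀ (T.π (j + 1))).comp (T.chainClass (j + 1)) (zero_add _) = 0 :=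
  (T.shortExact j).comp_extClass_assoc _ _

lemma exists_comp_chainClass {k : ℕ} (e : Ext X (T.K 0) k)
    (he : e.comp (Ext.mk₀ (T.ι 0)) (add_zero k) = 0) {a r : ℕ} (hk : a + r = k)
    (hY : ∀ j b, 1 ≤ j → j < r → b + j = k → ∀ x : Ext X (T.Y (j + 1)) b, x = 0) :
    ∃ f : Ext X (T.K r) a, f.comp (T.chainClass r) hk = e := by
  induction r generalizing a with
  | zero => subst hk; exact ⟨e, e.comp_mk₀_id⟩
  | succ r ih =>
    obtain ⟨f, rfl⟩ := ih (a := a + 1) (by lia) fun j b hj hjr ↦ hY j b hj (by lia)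
    have hf : f.comp (Ext.mk₀ (T.ι r)) (add_zero _) = 0 := by
      cases r with
      | zero =>
        obtain rfl : k = a + 1 := by lia
        simpa [chainClass] using he
      | succ r => exact hY (r + 1) (a + 1) (by lia) (by lia) (by lia) _
    obtain ⟨g, rfl⟩ := Ext.covariant_sequence_exact₁ X (T.shortExact r) f hf rfl
    exact ⟨g, (Ext.comp_assoc _ _ _ _ _ (by lia)).symm⟩

lemma ext_K_eq_zero {j a : ℕ} (hjm : j ≤ m) (hma : m ≤ a + j)
    (hY : ∀ i b, j ≤ i → i ≤ m → b + i = a + j → ∀ x : Ext X (T.Y (i + 1)) b, x = 0)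
    (x : Ext X (T.K j) a) : x = 0 := by
  induction hjm using Nat.decreasingInduction generalizing a with
  | self =>
    have hKY : ∀ y : Ext X (T.Y (m + 1)) a, y = 0 := hY m a le_rfl le_rfl rfl
    rw [← T.hKm] at hKY
    exact hKY x
  | of_succ j hj ih =>
    obtain ⟨b, rfl⟩ : ∃ b, a = b + 1 := ⟨a - 1, by lia⟩
    obtain ⟨y, rfl⟩ := Ext.covariant_sequence_exact₁ X (T.shortExact j) x
      (hY j (b + 1) le_rfl hj.le rfl _) rfl
    rw [ih (by lia) (fun i c hi him hc ↦ hY i c (by lia) him (by lia)) y, Ext.zero_comp]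

lemma exists_comp_mk₀_π_eq {a b r : ℕ} (hr : 0 < r) (hrm : r < m) (hab : b + 1 = a)
    (hrow : T.RowExactAt X a r) (hK : ∀ y : Ext X (T.K (r + 1)) b, y = 0)
    (f : Ext X (T.K r) a) :
    ∃ g : Ext X (T.Y r) a, g.comp (Ext.mk₀ (T.π r)) (add_zero a) = f := by
  obtain ⟨g, hg⟩ := (hrow (f.comp (Ext.mk₀ (T.ι r)) (add_zero a))).1 (by simp [T.ι_comp_d hrm])
  dsimp only at hg
  have hι : (g.comp (Ext.mk₀ (T.π r)) (add_zero a) - f).comp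
      (Ext.mk₀ (T.ι r)) (add_zero a) = 0 := by
    rw [sub_eq_add_neg, Ext.add_comp, Ext.neg_comp, ← sub_eq_add_neg, sub_eq_zero, ← hg,
      Ext.comp_assoc_of_third_deg_zero, Ext.mk₀_comp_mk₀, T.dmid_eq r hr hrm]
  obtain ⟨y, hy⟩ := Ext.covariant_sequence_exact₁ X (T.shortExact r) _ hι hab
  exact ⟨g, sub_eq_zero.1 (by rw [← hy, hK y, Ext.zero_comp])⟩

lemma eq_zero_of_comp_mk₀_ι_eq_zero {a r k : ℕ} (hk : a + r = k) (hr : 0 < r) (hrm : r < m)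
    (hmk : m ≤ k) (hrow : T.RowExactAt X a r)
    (hY : ∀ j b, 1 ≤ j → j ≤ m → j ≠ r → b + j = k → ∀ x : Ext X (T.Y (j + 1)) b, x = 0)
    (e : Ext X (T.K 0) k) (he : e.comp (Ext.mk₀ (T.ι 0)) (add_zero k) = 0) : e = 0 := by
  obtain ⟨f, rfl⟩ := T.exists_comp_chainClass e he hk
    fun j b hj hjr ↦ hY j b hj (by lia) (by lia)
  obtain ⟨b, rfl⟩ : ∃ b, a = b + 1 := ⟨a - 1, by lia⟩
  have hK : ∀ y : Ext X (T.K (r + 1)) b, y = 0 :=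
    T.ext_K_eq_zero (by lia) (by lia)
      fun i c hi him hc ↦ hY i c (by lia) him (by lia) (by lia)
  obtain ⟨g, rfl⟩ := T.exists_comp_mk₀_π_eq hr hrm rfl hrow hK f
  obtain ⟨j, rfl⟩ : ∃ j, r = j + 1 := ⟨r - 1, by lia⟩
  rw [Ext.comp_assoc_of_second_deg_zero, T.mk₀_π_comp_chainClass, Ext.comp_zero]

end DimensionShifting

/-- The exact sequence spliced from short exact sequences
`0 → (s i).left → (s i).right → (s (i + 1)).left → 0`, truncated at a stage `m` where `s m` is an
identity. Arrows are used so that source, target and morphism can be compared by one equation. -/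
def ofArrows (s : ℕ → Arrow C) (p : ∀ i, (s i).right ⟶ (s (i + 1)).left)
    (w : ∀ i, (s i).hom ≫ p i = 0) (hs : ∀ i, (ShortComplex.mk _ _ (w i)).ShortExact)
    (hm : ∃ h : (s m).left = (s m).right, (s m).hom = eqToHom h) : ExactExtension C m where
  Y
    | 0 => (s 0).left
    | i + 1 => (s i).right
  d
    | 0 => (s 0).hom
    | i + 1 => p i ≫ (s (i + 1)).hom
  K i := (s i).left
  ι i := (s i).hom
  π
    | 0 => 𝟙 _
    | i + 1 => p i
  hK0 := rfl
  hKm := hm.1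
  zero := w
  shortExact := hs
  d0_eq := Category.id_comp _
  dmid_eq
    | _ + 1, _, _ => rfl
  dlast_eq := by
    obtain ⟨h, hh⟩ := hm
    cases m with
    | zero => exact hh.trans (Category.id_comp _).symm
    | succ m => exact congrArg (p m ≫ ·) hh

end ExactExtension

section Coresolution

variable {C : Type u} [Category.{v} C] [Abelian C]

/-- The embeddings `K j ⟶ A j` of a coresolution that starts with the arrow `f`: its cosyzygies
are `K (j + 1) = A j / K j`, and `K j` is embedded by `F j` for `j ≥ 1`. -/
noncomputable def cosyzygyArrow (f : Arrow C) (F : ℕ → ∀ K : C, Under K) : ℕ → Arrow C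
  | 0 => f
  | j + 1 => Arrow.mk (F (j + 1) (cokernel (cosyzygyArrow f F j).hom)).hom

lemma mono_cosyzygyArrow_hom {f : Arrow C} (hf : Mono f.hom) {F : ℕ → ∀ K : C, Under K}
    (hF : ∀ j K, Mono (F j K).hom) : ∀ j, Mono (cosyzygyArrow f F j).hom
  | 0 => hf
  | _ + 1 => hF _ _

lemma exists_exactExtension_of_mono {n : ℕ} (hn : 1 ≤ n) (W : MorphismProperty C)
    (hW : ∀ K : C, ∃ (A : C) (g : K ⟶ A), Mono g ∧ W g) {Y A : C} (f : Y ⟶ A) [Mono f] :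
    ∃ T : ExactExtension C n, Arrow.mk (T.ι 0) = Arrow.mk f ∧
      ∀ j, 1 ≤ j → j < n → W (T.ι j) := by
  choose B g hg hWg using hW
  let F (j : ℕ) (K : C) : Under K := if j < n then Under.mk (g K) else Under.mk (𝟙 K)
  have hF (j : ℕ) (K : C) : Mono (F j K).hom := by
    by_cases hj : j < n
    · rw [show F j K = Under.mk (g K) from if_pos hj]
      exact hg K
    · rw [show F j K = Under.mk (𝟙 K) from if_neg hj]
      exact inferInstanceAs (Mono (𝟙 K))
  let s := cosyzygyArrow (Arrow.mk f) F
  have hs (j : ℕ) : Mono (s j).hom := mono_cosyzygyArrow_hom ‹Mono f› hF j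
  have hlast : ∃ h : (s n).left = (s n).right, (s n).hom = eqToHom h := by
    obtain ⟨m, rfl⟩ : ∃ m, n = m + 1 := ⟨n - 1, by lia⟩
    have hFm (K : C) : F (m + 1) K = Under.mk (𝟙 K) := if_neg (lt_irrefl _)
    change ∃ h : _ = (F (m + 1) _).right, (F (m + 1) _).hom = eqToHom h
    rw [hFm]
    exact ⟨rfl, rfl⟩
  refine ⟨.ofArrows s (fun i ↦ cokernel.π (s i).hom) (fun i ↦ cokernel.condition _) (fun i ↦
    { exact := ShortComplex.exact_of_g_is_cokernel _ (cokernelIsCokernel (s i).hom)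
      mono_f := hs i
      epi_g := inferInstanceAs (Epi (cokernel.π (s i).hom)) }) hlast, rfl, ?_⟩
  rintro (_ | j) hj hjn
  · lia
  · have hFj (K : C) : F (j + 1) K = Under.mk (g K) := if_pos hjn
    change W (F (j + 1) _).hom
    rw [hFj]
    exact hWg _

end Coresolution

section ClusterTilting

variable {C : Type u} [Category.{v} C] [Abelian C]

/-- The left `M`-approximations: morphisms to an object of `M` through which every morphism to an
object of `M` factors. -/
def leftApproximations (M : Set C) : MorphismProperty C := fun E X f ↦
  X ∈ M ∧ ∀ X' ∈ M, ∀ g : E ⟶ X', ∃ h : X ⟶ X', f ≫ h = g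

variable [HasExt.{w} C] {n : ℕ} {M : Set C}

/-- The left perpendicular subcategory of `M` in degrees `1, …, n - 1`. It is the first of the
two subcategories that the definition of an `n`-cluster tilting `M` requires to be `M`. -/
def leftPerp (n : ℕ) (M : Set C) : Set C :=
  {E | ∀ Y ∈ M, ∀ i : ℕ, 1 ≤ i → i < n → ∀ e : Ext E Y i, e = 0}

lemma ExactExtension.ext_K_eq_zero_of_leftApproximations {m : ℕ} (T : ExactExtension C m)
    (h0 : T.K 0 ∈ leftPerp n M) (hY : ∀ j < m, T.Y (j + 1) ∈ leftPerp n M)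
    (hι : ∀ j, 1 ≤ j → j < m → leftApproximations M (T.ι j)) {j : ℕ} (hj : j ≤ m)
    {Z : C} (hZ : Z ∈ M) {i : ℕ} (hi : 1 ≤ i) (hin : i < n) (hij : i ≠ j)
    (e : Ext (T.K j) Z i) : e = 0 := by
  induction j generalizing i with
  | zero => exact h0 Z hZ i hi hin e
  | succ j ih =>
    obtain ⟨i, rfl⟩ : ∃ i', i = 1 + i' := ⟨i - 1, by lia⟩
    obtain ⟨y, rfl⟩ := Ext.contravariant_sequence_exact₃ (T.shortExact j) Z e
      (hY j hj Z hZ _ hi hin _) rfl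
    rcases Nat.eq_zero_or_pos i with rfl | hi
    · obtain ⟨g, rfl⟩ := (Ext.mk₀_bijective _ _).2 y
      obtain ⟨h, rfl⟩ := (hι j (by lia) hj).2 Z hZ g
      rw [← Ext.mk₀_comp_mk₀]
      exact (T.shortExact j).extClass_comp_assoc _
    · rw [ih (by lia) hi (by lia) (by lia) y, Ext.comp_zero]

lemma ExactExtension.Y_mem_of_leftApproximations (hM : leftPerp n M = M) (T : ExactExtension C n)
    (h0 : T.Y 0 ∈ M) (h1 : T.Y 1 ∈ M)
    (hι : ∀ j, 1 ≤ j → j < n → leftApproximations M (T.ι j)) : ∀ i ≤ n + 1, T.Y i ∈ M := by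
  have hY : ∀ j < n, T.Y (j + 1) ∈ M
    | 0, _ => h1
    | j + 1, hj => (hι (j + 1) j.succ_pos hj).1
  have hlast : T.Y (n + 1) ∈ leftPerp n M := by
    rw [← T.hKm]
    exact fun Z hZ i hi hin e ↦ T.ext_K_eq_zero_of_leftApproximations (hM.ge (T.hK0 ▸ h0))
      (fun j hj ↦ hM.ge (hY j hj)) hι le_rfl hZ hi hin hin.ne e
  rintro (_ | i) hi
  · exact h0
  · rcases (Nat.le_of_succ_le_succ hi).lt_or_eq with h | rfl
    exacts [hY i h, hM.le hlast]

lemma exists_exactExtension_mem (hn : 1 ≤ n) (hM : leftPerp n M = M)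
    (happrox : ∀ E : C, ∃ (X : C) (f : E ⟶ X), Mono f ∧ leftApproximations M f)
    {Y A : C} (hY : Y ∈ M) (hA : A ∈ M) (f : Y ⟶ A) [Mono f] :
    ∃ T : ExactExtension C n, Arrow.mk (T.ι 0) = Arrow.mk f ∧ ∀ i ≤ n + 1, T.Y i ∈ M := by
  obtain ⟨T, hT, hι⟩ := exists_exactExtension_of_mono hn (leftApproximations M) happrox f
  have hK0 : T.K 0 = Y := congrArg Comma.left hT
  have hY1 : T.Y 1 = A := congrArg Comma.right hT
  exact ⟨T, hT, T.Y_mem_of_leftApproximations hM (T.hK0 ▸ hK0 ▸ hY) (hY1 ▸ hA) hι⟩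

lemma exists_mono_mem_comp_mk₀_eq_zero
    (hmono : ∀ E : C, ∃ (X : C) (f : E ⟶ X), Mono f ∧ X ∈ M)
    {X Y : C} {k : ℕ} (hk : 1 ≤ k) (e : Ext X Y k) :
    ∃ (A : C) (f : Y ⟶ A), Mono f ∧ A ∈ M ∧ e.comp (Ext.mk₀ f) (add_zero k) = 0 := by
  obtain ⟨k, rfl⟩ : ∃ k', k = k' + 1 := ⟨k - 1, by lia⟩
  obtain ⟨E, α, _, hα⟩ := exists_mono_comp_mk₀_eq_zero e
  obtain ⟨A, f, _, hA⟩ := hmono E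
  refine ⟨A, α ≫ f, mono_comp α f, hA, ?_⟩
  rw [← Ext.mk₀_comp_mk₀, ← Ext.comp_assoc_of_third_deg_zero, hα, Ext.zero_comp]

lemma not_dvd_of_add_eq_of_ne_mod {j b k : ℕ} (hjn : j ≤ n) (hk : ¬ n ∣ k)
    (hjk : j ≠ k % n) (hbj : b + j = k) : ¬ n ∣ b := by
  rintro ⟨c, rfl⟩
  subst hbj
  rcases hjn.lt_or_eq with h | rfl
  · exact hjk (by rw [Nat.mul_add_mod, Nat.mod_eq_of_lt h])
  · exact hk ⟨c + 1, rfl⟩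

theorem nZ_cluster_tilting_of_covariant_les_general (hn : 1 ≤ n) (hM : leftPerp n M = M)
    (happrox : ∀ E : C, ∃ (X : C) (f : E ⟶ X), Mono f ∧ leftApproximations M f)
    (hrow : ∀ T : ExactExtension C n, (∀ i ≤ n + 1, T.Y i ∈ M) →
      ∀ X ∈ M, ∀ q i : ℕ, 1 ≤ q → 1 ≤ i → i < n → T.RowExactAt X (q * n) i) :
    ∀ X ∈ M, ∀ Y ∈ M, ∀ k : ℕ, 1 ≤ k → ¬ (n ∣ k) → ∀ e : Ext X Y k, e = 0 := by
  intro X hX Y hY k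
  induction k using Nat.strong_induction_on generalizing Y with
  | _ k ih =>
  intro hk hnk e
  rcases lt_or_ge k n with hkn | hkn
  · exact hM.ge hX Y hY k hk hkn e
  obtain ⟨A, f, _, hA, he⟩ := exists_mono_mem_comp_mk₀_eq_zero
    (fun E ↦ (happrox E).imp fun _ ↦ .imp fun _ h ↦ ⟨h.1, h.2.1⟩) hk e
  obtain ⟨T, hTf, hT⟩ := exists_exactExtension_mem hn hM happrox hY hA f
  have hr : 1 ≤ k % n := Nat.pos_of_ne_zero (mt Nat.dvd_of_mod_eq_zero hnk)
  have hrn : k % n < n := Nat.mod_lt k hn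
  have hkill : ∀ e : Ext X (Arrow.mk (T.ι 0)).left k,
      e.comp (Ext.mk₀ (Arrow.mk (T.ι 0)).hom) (add_zero k) = 0 → e = 0 :=
    T.eq_zero_of_comp_mk₀_ι_eq_zero (Nat.div_add_mod' k n) hr hrn hkn
      (hrow T hT X hX _ _ (Nat.div_pos hkn hn) hr hrn) fun j b hj hjn hjr hb ↦ by
        have hnb : ¬ n ∣ b := not_dvd_of_add_eq_of_ne_mod hjn hnk hjr hb
        exact ih b (by lia) _ (hT _ (by lia)) (Nat.pos_of_ne_zero fun h ↦ hnb (h ▸ dvd_zero n)) hnb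
  rw [hTf] at hkill
  exact hkill e he

end ClusterTilting

/-- Let `𝓔` be an abelian category, `n ≥ 1`, and `M` an `n`-cluster tilting
subcategory of `𝓔`.  If for every `X ∈ M` and every `n`-exact sequence `Y` in `M` the induced
covariant long sequence of `Ext`-groups is exact at every spot, then `M` is an `nℤ`-cluster
tilting subcategory, i.e. `Ext^k(X,Y) = 0` for all `X, Y ∈ M` and all `k ≥ 1` not divisible
by `n`. -/
theorem nZ_cluster_tilting_of_covariant_les
    {C : Type u} [Category.{v} C] [Abelian C] [HasExt.{w} C]
    (n : ℕ) (hn : 1 ≤ n) (M : Set C) (hM : IsNClusterTilting n M)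
    (H : ∀ T : ExactExtension C n, (∀ i ≤ n + 1, T.Y i ∈ M) →
      ∀ X ∈ M, CovLES n X T) :
    ∀ X ∈ M, ∀ Y ∈ M, ∀ k : ℕ, 1 ≤ k → ¬ (n ∣ k) → ∀ e : Ext X Y k, e = 0 := by
  exact nZ_cluster_tilting_of_covariant_les_general hn (Set.ext fun E ↦ (hM.2.2.2.1 E).symm)
    (fun E ↦ (hM.2.1 E).imp fun _ ↦ .imp fun _ h ↦ ⟨h.2.1, h.1, h.2.2⟩)
    fun T hT X hX q i _ _ hi ↦ (H T hT X hX).2.1 q i hi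

end NZPaper
end

section
/- Let 𝓔 be an abelian category, n ≥ 1, and M an n-cluster tilting subcategory of 𝓔. Suppose that for every object Y ∈ M and every n-exact sequence X : X⁰ → X¹ → ⋯ → Xⁿ → X^{n+1} in M, the induced sequence of abelian groups 0 → Hom(X^{n+1},Y) → Hom(Xⁿ,Y) → ⋯ → Hom(X⁰,Y) → Extⁿ(X^{n+1},Y) → ⋯ → Extⁿ(X⁰,Y) → Ext²ⁿ(X^{n+1},Y) → ⋯ is exact at every spot (maps within each row induced by the differentials of X, and each connecting map Ext^{kn}(X⁰,Y) → Ext^{(k+1)n}(X^{n+1},Y) given by Yoneda precomposition with [X] ∈ Extⁿ(X^{n+1},X⁰)). Then M is an nℤ-cluster tilting subcategory, i.e., Ext^k(X,Y)=0 for all X,Y ∈ M and all k ≥ 1 not divisible by n. -/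
open CategoryTheory CategoryTheory.Abelian CategoryTheory.Limits

universe w v u

namespace NZPaper

/-!
Let `e ∈ Ext^k(X, Z)` with `k = m + n` and `n ∤ k`. Classes of positive degree are effaced by an
epimorphism, so `e` dies on some epimorphism `p : A ⟶ X` with `A ∈ M`; completing `p` to the left by
right `M`-approximations gives an `n`-exact sequence, since dimension shifting puts the last kernel
in `M`. Cut the sequence into short exact sequences `0 → K a → Y (a + 1) → K (a + 1) → 0`. At
`Y a`, `0 < a < n`, the row of degree `m + a` is exact: by assumption if `n ∣ m + a`, and because
`Ext^(m + a)(Y a, Z)` is zero by induction on `k` otherwise. Starting from `Ext^m(K 0, Z) = 0`, the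
long exact sequences then show inductively that `Ext^(m + a)(K a, Z) → Ext^(m + a)(Y a, Z)` is
injective, which for `a = n` gives `e = 0`.
-/

section Effacement

variable {C : Type u} [Category.{v} C] [Abelian C]

lemma epi_f_of_epi_homologyMap_to_single {ι : Type*} [DecidableEq ι] {c : ComplexShape ι}
    {K : HomologicalComplex C c} {X : C} {i : ι}
    (s : K ⟶ (HomologicalComplex.single C c i).obj X)
    [Epi (HomologicalComplex.homologyMap s i)] : Epi (s.f i) := by
  have factorization : K.iCycles i ≫ s.f i = K.homologyπ i ≫ HomologicalComplex.homologyMap s i ≫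
      (HomologicalComplex.singleObjHomologySelfIso c i X).hom ≫
        (HomologicalComplex.singleObjXSelf c i X).inv := by
    rw [HomologicalComplex.homologyπ_naturality_assoc,
      HomologicalComplex.homologyπ_singleObjHomologySelfIso_hom_assoc,
      ← HomologicalComplex.singleObjCyclesSelfIso_inv_iCycles, Iso.hom_inv_id_assoc,
      HomologicalComplex.cyclesMap_i]
  have : Epi (K.iCycles i ≫ s.f i) := factorization ▸ inferInstance
  exact epi_of_epi (K.iCycles i) (s.f i)

lemma exists_epi_single_map_factors {X : C} {K : CochainComplex C ℤ} {i : ℤ} [K.IsStrictlyLE i]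
    (s : K ⟶ (HomologicalComplex.single C (ComplexShape.up ℤ) i).obj X) [QuasiIsoAt s i] :
    ∃ (E : C) (p : E ⟶ X) (φ : (HomologicalComplex.single C (ComplexShape.up ℤ) i).obj E ⟶ K),
      Epi p ∧ φ ≫ s = (HomologicalComplex.single C (ComplexShape.up ℤ) i).map p := by
  have : Epi (s.f i) := epi_f_of_epi_homologyMap_to_single s
  refine ⟨K.X i, s.f i ≫ (HomologicalComplex.singleObjXSelf _ i X).hom,
    HomologicalComplex.mkHomFromSingle (𝟙 _) fun j hij ↦
      (K.isZero_of_isStrictlyLE i j (by rw [← hij]; lia)).eq_of_tgt _ _, epi_comp _ _, ?_⟩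
  apply HomologicalComplex.from_single_hom_ext
  simp [HomologicalComplex.single_map_f_self]

lemma exists_epi_Q_map_single_comp_eq_zero [HasDerivedCategory.{w} C] {X : C}
    {L : CochainComplex C ℤ} {i : ℤ} (hL : IsZero (L.X i))
    (ψ : DerivedCategory.Q.obj ((HomologicalComplex.single C (ComplexShape.up ℤ) i).obj X) ⟶
      DerivedCategory.Q.obj L) :
    ∃ (E : C) (p : E ⟶ X), Epi p ∧
      DerivedCategory.Q.map ((HomologicalComplex.single C (ComplexShape.up ℤ) i).map p) ≫ ψ =
        0 := by
  obtain ⟨K, _, s, hs, g, rfl⟩ := DerivedCategory.right_fac_of_isStrictlyLE ψ i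
  have : QuasiIso s := by rwa [← DerivedCategory.isIso_Q_map_iff_quasiIso]
  obtain ⟨E, p, φ, hp, hφ⟩ := exists_epi_single_map_factors s
  have hφg : φ ≫ g = 0 := HomologicalComplex.from_single_hom_ext (hL.eq_of_tgt _ _)
  refine ⟨E, p, hp, ?_⟩
  rw [← hφ, Functor.map_comp, Category.assoc, IsIso.hom_inv_id_assoc, ← Functor.map_comp, hφg,
    Functor.map_zero]

lemma exists_epi_mk₀_comp_eq_zero [HasExt.{w} C] {X Y : C} {n : ℕ} (hn : 0 < n) (e : Ext X Y n) :
    ∃ (E : C) (p : E ⟶ X), Epi p ∧ (Ext.mk₀ p).comp e (zero_add n) = 0 := by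
  let := HasDerivedCategory.standard C
  let shift := ((DerivedCategory.singleFunctors C).shiftIso n (-n) 0 (by lia)).app Y
  obtain ⟨E, p, hp, hpe⟩ := exists_epi_Q_map_single_comp_eq_zero
    (L := (HomologicalComplex.single C (ComplexShape.up ℤ) (-n)).obj Y)
    (HomologicalComplex.isZero_single_obj_X _ _ _ _ (by lia)) (e.hom ≫ shift.hom)
  refine ⟨E, p, hp, ?_⟩
  ext
  rw [Ext.comp_hom, Ext.mk₀_hom, Ext.zero_hom, ShiftedHom.mk₀_comp, ← cancel_mono shift.hom,
    zero_comp, Category.assoc]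
  exact hpe

end Effacement

section DimensionShifting

variable {C : Type u} [Category.{v} C] [Abelian C] [HasExt.{w} C]

lemma injective_postcomp_f_of_surjective_postcomp_g {S : ShortComplex C} (hS : S.ShortExact)
    (B : C) {i : ℕ} (hg : Function.Surjective ((Ext.mk₀ S.g).postcomp B (add_zero i))) :
    Function.Injective ((Ext.mk₀ S.f).postcomp B (add_zero (i + 1))) := by
  rw [injective_iff_map_eq_zero]
  intro x hx
  obtain ⟨y, rfl⟩ := Ext.covariant_sequence_exact₁ B hS x hx rfl
  obtain ⟨z, rfl⟩ := hg y
  change (z.comp (Ext.mk₀ S.g) (add_zero i)).comp hS.extClass rfl = 0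
  rw [Ext.comp_assoc_of_second_deg_zero, hS.comp_extClass, Ext.comp_zero]

lemma injective_precomp_g_of_surjective_precomp_f {S : ShortComplex C} (hS : S.ShortExact)
    (Z : C) {N : ℕ} (hf : Function.Surjective ((Ext.mk₀ S.f).precomp Z (zero_add N))) :
    Function.Injective ((Ext.mk₀ S.g).precomp Z (zero_add (N + 1))) := by
  rw [injective_iff_map_eq_zero]
  intro x hx
  obtain ⟨y, rfl⟩ := Ext.contravariant_sequence_exact₃ hS Z x hx (add_comm 1 N)
  obtain ⟨z, rfl⟩ := hf y
  exact hS.extClass_comp_assoc z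

/-- A right `M`-approximation of `E`; it is not required to be an epimorphism. -/
def IsRightApproximation (M : Set C) {X E : C} (f : X ⟶ E) : Prop :=
  X ∈ M ∧ ∀ X' ∈ M, ∀ g : X' ⟶ E, ∃ h : X' ⟶ X, h ≫ f = g

lemma IsRightApproximation.ext_X₁_eq_zero {M : Set C} {S : ShortComplex C}
    (hg : IsRightApproximation M S.g) (hS : S.ShortExact) {B : C} (hB : B ∈ M) {i : ℕ}
    (hX₂ : ∀ x : Ext B S.X₂ (i + 1), x = 0) (hX₃ : 1 ≤ i → ∀ x : Ext B S.X₃ i, x = 0)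
    (x : Ext B S.X₁ (i + 1)) : x = 0 := by
  have surjective_g : Function.Surjective ((Ext.mk₀ S.g).postcomp B (add_zero i)) := by
    rcases i with _ | i
    · intro y
      obtain ⟨f, rfl⟩ := (Ext.mk₀_bijective _ _).2 y
      obtain ⟨h, rfl⟩ := hg.2 B hB f
      exact ⟨Ext.mk₀ h, Ext.mk₀_comp_mk₀ h S.g⟩
    · exact fun y ↦ ⟨0, (map_zero _).trans (hX₃ (by lia) y).symm⟩
  exact injective_postcomp_f_of_surjective_postcomp_g hS B surjective_g
    ((hX₂ _).trans (hX₂ _).symm)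

end DimensionShifting

section Resolution

variable {C : Type u} [Category.{v} C] [Abelian C]

open ZeroObject in
/-- The sequence `X, 0, 0, …`, used to fill the irrelevant indices of an `ExactExtension`. -/
noncomputable def padZero (X : C) : ℕ → C
  | 0 => X
  | _ + 1 => 0

lemma shortExact_padZero (X : C) (i : ℕ) :
    (ShortComplex.mk (𝟙 (padZero X i)) (0 : padZero X i ⟶ padZero X (i + 1))
      comp_zero).ShortExact :=
  (ShortComplex.Splitting.ofIsIsoOfIsZero _ inferInstance (isZero_zero C)).shortExact

/-- A short exact sequence `0 → X₁ → X₂ → X₃ → 0`, regarded as an exact extension with one middle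
term. -/
noncomputable def ExactExtension.ofShortExact {S : ShortComplex C} (hS : S.ShortExact) :
    ExactExtension C 1 where
  Y
    | 0 => S.X₁
    | 1 => S.X₂
    | i + 2 => padZero S.X₃ i
  d
    | 0 => S.f
    | 1 => S.g
    | _ + 2 => 0
  K
    | 0 => S.X₁
    | i + 1 => padZero S.X₃ i
  ι
    | 0 => S.f
    | _ + 1 => 𝟙 _
  π
    | 0 => 𝟙 _
    | 1 => S.g
    | _ + 2 => 0
  hK0 := rfl
  hKm := rfl
  zero
    | 0 => S.zero
    | _ + 1 => comp_zero
  shortExact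
    | 0 => hS
    | i + 1 => shortExact_padZero S.X₃ i
  d0_eq := Category.id_comp _
  dmid_eq _ _ _ := by lia
  dlast_eq := (Category.comp_id _).symm

/-- The splice of `0 → N → A → T.K 0 → 0` with an exact extension `T` starting at `T.K 0`. There has
to be at least one middle term in `T`, because with none `ExactExtension` does not relate `T.ι 0` to
`T.π 0`. -/
def ExactExtension.cons {m : ℕ} (T : ExactExtension C (m + 1)) {N A : C} (f : N ⟶ A)
    (g : A ⟶ T.K 0) (w : f ≫ g = 0) (hS : (ShortComplex.mk f g w).ShortExact) :
    ExactExtension C (m + 2) where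
  Y
    | 0 => N
    | 1 => A
    | i + 2 => T.Y (i + 1)
  d
    | 0 => f
    | 1 => g ≫ T.ι 0
    | i + 2 => T.d (i + 1)
  K
    | 0 => N
    | i + 1 => T.K i
  ι
    | 0 => f
    | i + 1 => T.ι i
  π
    | 0 => 𝟙 _
    | 1 => g
    | i + 2 => T.π (i + 1)
  hK0 := rfl
  hKm := T.hKm
  zero
    | 0 => w
    | i + 1 => T.zero i
  shortExact
    | 0 => hS
    | i + 1 => T.shortExact i
  d0_eq := Category.id_comp _
  dmid_eq
    | 1, _, _ => rfl
    | i + 2, _, hi => T.dmid_eq (i + 1) (by lia) (by lia)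
  dlast_eq := T.dlast_eq

lemma ExactExtension.d_comp_π {n : ℕ} (T : ExactExtension C n) {i : ℕ} (hi : i < n) :
    T.d i ≫ T.π (i + 1) = 0 := by
  rcases Nat.eq_zero_or_pos i with rfl | hi_pos
  · rw [← cancel_epi (eqToHom T.hK0), ← Category.assoc, T.d0_eq, T.zero, comp_zero]
  · rw [T.dmid_eq i hi_pos hi, Category.assoc, T.zero, comp_zero]

lemma shortExact_kernel {X Y : C} (f : X ⟶ Y) [Epi f] :
    (ShortComplex.mk (kernel.ι f) f (kernel.condition f)).ShortExact :=
  { exact := ShortComplex.exact_kernel f }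

lemma exists_exactExtension_of_epi [HasExt.{w} C] {M : Set C} {n : ℕ}
    (happrox : ∀ E : C, ∃ (X : C) (f : X ⟶ E), Epi f ∧ IsRightApproximation M f)
    (hrigid : ∀ B ∈ M, ∀ Z ∈ M, ∀ i, 1 ≤ i → i < n → ∀ x : Ext B Z i, x = 0)
    {A X : C} (hA : A ∈ M) (hX : X ∈ M) (p : A ⟶ X) [Epi p] (m : ℕ) (hm : m < n) :
    ∃ T : ExactExtension C (m + 1), Arrow.mk (T.π (m + 1)) = Arrow.mk p ∧
      (∀ i ≤ m + 1, T.Y (i + 1) ∈ M) ∧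
      ∀ B ∈ M, ∀ i, 1 ≤ i → i ≤ m → ∀ x : Ext B (T.K 0) i, x = 0 := by
  induction m with
  | zero =>
    refine ⟨.ofShortExact (shortExact_kernel p), rfl, ?_, fun _ _ _ _ _ ↦ by lia⟩
    rintro (_ | _ | i) hi
    exacts [hA, hX, by lia]
  | succ m ih =>
    obtain ⟨T, hTp, hTM, hTK⟩ := ih (by lia)
    obtain ⟨Q, q, _, hq⟩ := happrox (T.K 0)
    refine ⟨T.cons _ q _ (shortExact_kernel q), hTp, ?_, ?_⟩
    · rintro (_ | i) hi
      exacts [hq.1, hTM i (by lia)]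
    · rintro B hB (_ | i) hi him
      · lia
      · exact IsRightApproximation.ext_X₁_eq_zero hq (shortExact_kernel q) hB
          (hrigid B hB Q hq.1 (i + 1) hi (by lia)) (hTK B hB i · (by lia))

end Resolution

section DiagramChase

variable {C : Type u} [Category.{v} C] [Abelian C] [HasExt.{w} C]

/-- Exactness at the middle of `Ext^N(Y^{i+2}, Z) → Ext^N(Y^{i+1}, Z) → Ext^N(Y^i, Z)`. -/
def ExactExtension.RowExactAt_s3 {n : ℕ} (T : ExactExtension C n) (Z : C) (N i : ℕ) : Prop :=
  Function.Exact ((Ext.mk₀ (T.d (i + 1))).precomp Z (zero_add N))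
    ((Ext.mk₀ (T.d i)).precomp Z (zero_add N))

lemma ContraLES.rowExactAt {n : ℕ} {Z : C} {T : ExactExtension C n} (hT : ContraLES n Z T)
    {i : ℕ} (hi : i < n) (k : ℕ) : T.RowExactAt_s3 Z (k * n) i :=
  hT.2.1 k i hi

lemma ExactExtension.rowExactAt_of_ext_eq_zero {n : ℕ} {T : ExactExtension C n} {Z : C} {N i : ℕ}
    (hzero : ∀ x : Ext (T.Y (i + 1)) Z N, x = 0) : T.RowExactAt_s3 Z N i := fun x ↦
  ⟨fun _ ↦ ⟨0, (map_zero _).trans (hzero x).symm⟩, fun _ ↦ (hzero x).symm ▸ map_zero _⟩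

lemma ExactExtension.surjective_precomp_ι {n : ℕ} (T : ExactExtension C n) (Z : C) {N i : ℕ}
    (hi : i + 1 < n) (hrow : T.RowExactAt_s3 Z N i)
    (hπ : Function.Injective ((Ext.mk₀ (T.π (i + 1))).precomp Z (zero_add N))) :
    Function.Surjective ((Ext.mk₀ (T.ι (i + 1))).precomp Z (zero_add N)) := by
  intro y
  have hdπ : (Ext.mk₀ (T.d i)).comp ((Ext.mk₀ (T.π (i + 1))).comp y (zero_add N))
      (zero_add N) = 0 := by
    rw [Ext.mk₀_comp_mk₀_assoc, T.d_comp_π (by lia), Ext.mk₀_zero, Ext.zero_comp]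
  obtain ⟨z, hz⟩ := (hrow _).1 hdπ
  refine ⟨z, hπ (Eq.trans ?_ hz)⟩
  change (Ext.mk₀ (T.π (i + 1))).comp ((Ext.mk₀ (T.ι (i + 1))).comp z (zero_add N)) (zero_add N) =
    (Ext.mk₀ (T.d (i + 1))).comp z (zero_add N)
  rw [Ext.mk₀_comp_mk₀_assoc, T.dmid_eq (i + 1) (by lia) hi]

lemma ExactExtension.injective_precomp_π {n : ℕ} (T : ExactExtension C n) (Z : C) (m : ℕ)
    (hK₀ : ∀ x : Ext (T.K 0) Z m, x = 0)
    (hrow : ∀ i, i + 1 < n → T.RowExactAt_s3 Z (m + (i + 1)) i) (i : ℕ) (hi : i < n) :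
    Function.Injective ((Ext.mk₀ (T.π (i + 1))).precomp Z (zero_add (m + (i + 1)))) := by
  induction i with
  | zero =>
    exact injective_precomp_g_of_surjective_precomp_f (T.shortExact 0) Z
      fun y ↦ ⟨0, (map_zero _).trans (hK₀ y).symm⟩
  | succ i ih =>
    exact injective_precomp_g_of_surjective_precomp_f (T.shortExact (i + 1)) Z
      (T.surjective_precomp_ι Z hi (hrow i hi) (ih (by lia)))

lemma injective_precomp_mk₀_of_arrow_eq {A X B X' : C} {f : A ⟶ X} {g : B ⟶ X'}
    (h : Arrow.mk f = Arrow.mk g) (Z : C) {N : ℕ}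
    (hf : Function.Injective ((Ext.mk₀ f).precomp Z (zero_add N))) :
    Function.Injective ((Ext.mk₀ g).precomp Z (zero_add N)) := by
  cases h
  exact hf

end DiagramChase

section ClusterTilting

variable {C : Type u} [Category.{v} C] [Abelian C] [HasExt.{w} C]

lemma exists_nExact_effacing {M : Set C} {n : ℕ} (hn : 1 ≤ n)
    (happrox : ∀ E : C, ∃ (X : C) (f : X ⟶ E), Epi f ∧ IsRightApproximation M f)
    (hmem : ∀ E : C, E ∈ M ↔ ∀ B ∈ M, ∀ i, 1 ≤ i → i < n → ∀ x : Ext B E i, x = 0)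
    {X Z : C} (hX : X ∈ M) {k : ℕ} (hk : 0 < k) (e : Ext X Z k) :
    ∃ (T : ExactExtension C n) (A : C) (p : A ⟶ X), Arrow.mk (T.π n) = Arrow.mk p ∧
      (∀ i ≤ n + 1, T.Y i ∈ M) ∧ (Ext.mk₀ p).comp e (zero_add k) = 0 := by
  obtain ⟨m, rfl⟩ : ∃ m, n = m + 1 := ⟨n - 1, by lia⟩
  obtain ⟨E, q, _, hq⟩ := exists_epi_mk₀_comp_eq_zero hk e
  obtain ⟨A, r, _, hr⟩ := happrox E
  have : Epi (r ≫ q) := epi_comp r q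
  obtain ⟨T, hTπ, hTM, hTK⟩ := exists_exactExtension_of_epi happrox
    (fun B hB Z hZ ↦ (hmem Z).1 hZ B hB) hr.1 hX (r ≫ q) m m.lt_succ_self
  refine ⟨T, A, r ≫ q, hTπ, ?_, ?_⟩
  · rintro (_ | i) hi
    · exact T.hK0 ▸ (hmem _).2 fun B hB i h1 hi ↦ hTK B hB i h1 (by lia)
    · exact hTM i (by lia)
  · rw [← Ext.mk₀_comp_mk₀_assoc, hq, Ext.comp_zero]

theorem nZ_cluster_tilting_of_contravariant_les_general {n : ℕ} (hn : 1 ≤ n) {M : Set C}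
    (happrox : ∀ E : C, ∃ (X : C) (f : X ⟶ E), Epi f ∧ IsRightApproximation M f)
    (hmem : ∀ E : C, E ∈ M ↔ ∀ B ∈ M, ∀ i, 1 ≤ i → i < n → ∀ x : Ext B E i, x = 0)
    {Z : C} (hZ : Z ∈ M)
    (hrow : ∀ T : ExactExtension C n, (∀ i ≤ n + 1, T.Y i ∈ M) →
      ∀ k i, 1 ≤ k → i + 1 < n → T.RowExactAt_s3 Z (k * n) i)
    {X : C} (hX : X ∈ M) {k : ℕ} (hk : 1 ≤ k) (hnk : ¬ n ∣ k) (e : Ext X Z k) : e = 0 := by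
  induction k using Nat.strong_induction_on generalizing X with
  | _ k vanishing
  rcases lt_or_ge k n with hkn | hnk_le
  · exact (hmem Z).1 hZ X hX k hk hkn e
  obtain ⟨m, rfl⟩ := Nat.exists_eq_add_of_le' hnk_le
  have hnm : ¬ n ∣ m := by rwa [Nat.dvd_add_self_right] at hnk
  have hm : 0 < m := Nat.pos_of_ne_zero fun h ↦ hnm (h ▸ dvd_zero n)
  obtain ⟨T, A, p, hTp, hTM, hp⟩ := exists_nExact_effacing hn happrox hmem hX hk e
  have hK₀ : ∀ x : Ext (T.K 0) Z m, x = 0 :=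
    vanishing m (by lia) (T.hK0 ▸ hTM 0 (by lia)) hm hnm
  have row_exact : ∀ i, i + 1 < n → T.RowExactAt_s3 Z (m + (i + 1)) i := by
    intro i hi
    by_cases hdvd : n ∣ m + (i + 1)
    · obtain ⟨c, hc⟩ := hdvd
      rw [hc, mul_comm]
      exact hrow T hTM c i (Nat.pos_of_ne_zero (by rintro rfl; lia)) hi
    · exact T.rowExactAt_of_ext_eq_zero
        (vanishing _ (by lia) (hTM (i + 1) (by lia)) (by lia) hdvd)
  obtain ⟨l, rfl⟩ : ∃ l, n = l + 1 := ⟨n - 1, by lia⟩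
  have injective_p := injective_precomp_mk₀_of_arrow_eq hTp Z
    (T.injective_precomp_π Z m hK₀ row_exact l l.lt_succ_self)
  exact (injective_iff_map_eq_zero _).1 injective_p e hp

end ClusterTilting

/-- Let `𝓔` be an abelian category, `n ≥ 1`, and `M` an `n`-cluster tilting
subcategory of `𝓔`.  If for every `Y ∈ M` and every `n`-exact sequence `X` in `M` the induced
contravariant long sequence of `Ext`-groups is exact at every spot, then `M` is an `nℤ`-cluster
tilting subcategory, i.e. `Ext^k(X,Y) = 0` for all `X, Y ∈ M` and all `k ≥ 1` not divisible
by `n`. -/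
theorem nZ_cluster_tilting_of_contravariant_les
    {C : Type u} [Category.{v} C] [Abelian C] [HasExt.{w} C]
    (n : ℕ) (hn : 1 ≤ n) (M : Set C) (hM : IsNClusterTilting n M)
    (H : ∀ T : ExactExtension C n, (∀ i ≤ n + 1, T.Y i ∈ M) →
      ∀ Y ∈ M, ContraLES n Y T) :
    ∀ X ∈ M, ∀ Y ∈ M, ∀ k : ℕ, 1 ≤ k → ¬ (n ∣ k) → ∀ e : Ext X Y k, e = 0 := by
  intro X hX Y hY k hk hnk e
  obtain ⟨-, -, hright, -, hmem⟩ := hM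
  exact nZ_cluster_tilting_of_contravariant_les_general hn
    (fun E ↦ let ⟨X, f, hX, hf, hlift⟩ := hright E; ⟨X, f, hf, hX, hlift⟩) hmem hY
    (fun T hT k i _ hi ↦ (H T hT Y hY).rowExactAt (by lia) k) hX hk hnk e

end NZPaper
end

section
/- Let 𝓔 be an abelian category, n ≥ 1, and M an n-cluster tilting subcategory of 𝓔. Let X : 0 → X⁰ → X¹ → ⋯ → Xⁿ → X^{n+1} → 0 and Y : 0 → X⁰ → Y¹ → ⋯ → Yⁿ → X^{n+1} → 0 be two n-exact sequences in M with the same end terms X⁰ and X^{n+1}, and suppose their Yoneda classes in Extⁿ(X^{n+1},X⁰) are equal. Then X and Y are homotopy equivalent: there exists a morphism of complexes X → Y which is the identity on X⁰ and on X^{n+1} and which is a homotopy equivalence of complexes. -/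
open CategoryTheory CategoryTheory.Abelian CategoryTheory.Limits

universe w v u

/-! Cut both extensions into their short exact sequences. Rigidity kills `Ext¹` of the `j`-th syzygy
with values in `M` for `1 < j ≤ n`, so a morphism on the left end extends square by square; the
only obstruction sits in the first square, where it is a Yoneda class transported injectively into
`Extⁿ`, and there it vanishes by hypothesis. On the right end, composition with the class of the
preceding squares is injective on `Ext¹`, so the last square can be chosen to induce the prescribed
morphism. Applying this in both directions gives `f` and `g`; as `f ≫ g - 𝟙` vanishes on the left
end, the same extension property makes it null-homotopic.
-/

namespace NZPaper

section Sequences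

variable {α : ℕ → Type*} {P : ∀ i, α i → Prop} {R : ∀ i, α i → α (i + 1) → Prop}

lemma exists_seq_of_step [∀ i, Nonempty (α i)] {n : ℕ} {x : α 0} (hx : P 0 x)
    (step : ∀ i < n, ∀ a, P i a → ∃ b, P (i + 1) b ∧ R i a b) :
    ∃ a : ∀ i, α i, a 0 = x ∧ (∀ i ≤ n, P i (a i)) ∧ ∀ i < n, R i (a i) (a (i + 1)) := by
  choose! succ hP hR using step
  let a : ∀ i, α i := Nat.rec x succ
  have ha : ∀ i ≤ n, P i (a i) := fun i hi => by
    induction i with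
    | zero => exact hx
    | succ i ih => exact hP i hi _ (ih (by lia))
  exact ⟨a, rfl, ha, fun i hi => hR i hi _ (ha i hi.le)⟩

lemma exists_seq_of_step_of_last [∀ i, Nonempty (α i)] {m : ℕ} {x : α 0} {z : α (m + 1)}
    (hx : P 0 x) (step : ∀ i < m, ∀ a, P i a → ∃ b, P (i + 1) b ∧ R i a b)
    (last : ∀ a, P m a → R m a z) :
    ∃ a : ∀ i, α i, a 0 = x ∧ a (m + 1) = z ∧ ∀ i ≤ m, R i (a i) (a (i + 1)) := by
  obtain ⟨a, ha₀, haP, haR⟩ := exists_seq_of_step hx step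
  refine ⟨Function.update a (m + 1) z, by simp [ha₀], by simp, fun i hi => ?_⟩
  rw [Function.update_of_ne (by lia)]
  rcases hi.lt_or_eq with hlt | rfl
  · rw [Function.update_of_ne (by lia)]
    exact haR i hlt
  · rw [Function.update_self]
    exact last _ (haP i le_rfl)

end Sequences

variable {C : Type u} [Category.{v} C] [Abelian C]

section ShortExact

variable {S S' : ShortComplex C}

lemma exists_hom_of_f_comp_eq (hS : S.ShortExact) {a : S.X₁ ⟶ S'.X₁} {b : S.X₂ ⟶ S'.X₂}
    (h : S.f ≫ b = a ≫ S'.f) : ∃ φ : S ⟶ S', φ.τ₁ = a ∧ φ.τ₂ = b := by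
  have : Epi S.g := hS.epi_g
  have hzero : S.f ≫ b ≫ S'.g = 0 := by rw [reassoc_of% h, S'.zero, comp_zero]
  obtain ⟨c, hc⟩ := hS.exact.desc' (b ≫ S'.g) hzero
  exact ⟨{ τ₁ := a, τ₂ := b, τ₃ := c, comm₁₂ := h.symm, comm₂₃ := hc.symm }, rfl, rfl⟩

variable [HasExt.{w} C] (hS : S.ShortExact) (hS' : S'.ShortExact)

lemma exists_f_comp_eq_of_extClass_comp_eq_zero {Z : C} {a : S.X₁ ⟶ Z}
    (h : hS.extClass.comp (Ext.mk₀ a) (add_zero 1) = 0) : ∃ b : S.X₂ ⟶ Z, S.f ≫ b = a := by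
  obtain ⟨e, he⟩ := Ext.contravariant_sequence_exact₁ hS Z (Ext.mk₀ a) rfl h
  obtain ⟨b, rfl⟩ := (Ext.mk₀_bijective _ _).surjective e
  exact ⟨b, (Ext.mk₀_bijective _ _).injective (by rw [← he, Ext.mk₀_comp_mk₀])⟩

lemma exists_comp_g_eq_of_comp_extClass_eq_zero {W : C} {c : W ⟶ S.X₃}
    (h : (Ext.mk₀ c).comp hS.extClass (zero_add 1) = 0) : ∃ b : W ⟶ S.X₂, b ≫ S.g = c := by
  obtain ⟨e, he⟩ := Ext.covariant_sequence_exact₃ W hS (Ext.mk₀ c) rfl h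
  obtain ⟨b, rfl⟩ := (Ext.mk₀_bijective _ _).surjective e
  exact ⟨b, (Ext.mk₀_bijective _ _).injective (by rw [← he, Ext.mk₀_comp_mk₀])⟩

lemma exists_hom_of_extClass_comp_eq {a : S.X₁ ⟶ S'.X₁} {c : S.X₃ ⟶ S'.X₃}
    (h : hS.extClass.comp (Ext.mk₀ a) (add_zero 1) =
      (Ext.mk₀ c).comp hS'.extClass (zero_add 1)) :
    ∃ φ : S ⟶ S', φ.τ₁ = a ∧ φ.τ₃ = c := by
  obtain ⟨b, hb⟩ : ∃ b : S.X₂ ⟶ S'.X₂, S.f ≫ b = a ≫ S'.f := by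
    refine exists_f_comp_eq_of_extClass_comp_eq_zero hS ?_
    rw [← Ext.mk₀_comp_mk₀, ← Ext.comp_assoc_of_third_deg_zero, h,
      Ext.comp_assoc_of_third_deg_zero, hS'.extClass_comp, Ext.comp_zero]
  obtain ⟨φ, rfl, -⟩ := exists_hom_of_f_comp_eq hS hb
  -- `φ` induces the wrong map on the quotient, by an error that lifts to `S'.X₂`.
  obtain ⟨l, hl⟩ : ∃ l : S.X₃ ⟶ S'.X₂, l ≫ S'.g = c - φ.τ₃ := by
    refine exists_comp_g_eq_of_comp_extClass_eq_zero hS' ?_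
    rw [sub_eq_add_neg, Ext.mk₀_add, Ext.mk₀_neg, Ext.add_comp, Ext.neg_comp, ← h,
      ShortComplex.ShortExact.extClass_naturality hS hS' φ, add_neg_cancel]
  exact ⟨{ τ₁ := φ.τ₁, τ₂ := φ.τ₂ + S.g ≫ l, τ₃ := c,
           comm₁₂ := by simp [φ.comm₁₂]
           comm₂₃ := by simp [hl, φ.comm₂₃] }, rfl, rfl⟩

end ShortExact

section Rigid

variable [HasExt.{w} C]

/-- `Extⁱ(X, Z) = 0` in the range `0 < i < n` that `n`-cluster tilting controls. -/
def ExtVanishing (n : ℕ) (X Z : C) : Prop :=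
  ∀ i : ℕ, 1 ≤ i → i < n → Subsingleton (Ext X Z i)

/-- An `n`-rigid class of objects: `Extⁱ` vanishes between any two of them for `0 < i < n`. -/
def IsRigid (n : ℕ) (M : Set C) : Prop :=
  ∀ X ∈ M, ∀ Z ∈ M, ExtVanishing.{w} n X Z

lemma IsNClusterTilting.isRigid {n : ℕ} {M : Set C} (hM : IsNClusterTilting.{w} n M) :
    IsRigid.{w} n M :=
  fun X hX Z hZ i h₁ hi => subsingleton_of_forall_eq 0 ((hM.2.2.2.1 X).1 hX Z hZ i h₁ hi)

lemma extTransport_eq_iff {X X' Z Z' : C} {a : ℕ} {e : Ext X Z a} {e' : Ext X' Z' a}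
    (hX : X = X') (hZ : Z = Z') :
    extTransport e hX hZ = e' ↔ e.comp (Ext.mk₀ (eqToHom hZ)) (add_zero a) =
      (Ext.mk₀ (eqToHom hX)).comp e' (zero_add a) := by
  subst hX hZ
  simp [extTransport]

lemma extTransport_comp_eq_iff {X X' Y Y' Z Z' W W' : C} {i : ℕ} {e : Ext X Z i}
    {e' : Ext Y W i} (hX : X = X') (hZ : Z = Z') (hY : Y = Y') (hW : W = W') {a : Z' ⟶ W'}
    {c : X' ⟶ Y'} :
    (extTransport e hX hZ).comp (Ext.mk₀ a) (add_zero i) =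
        (Ext.mk₀ c).comp (extTransport e' hY hW) (zero_add i) ↔
      e.comp (Ext.mk₀ (eqToHom hZ ≫ a ≫ eqToHom hW.symm)) (add_zero i) =
        (Ext.mk₀ (eqToHom hX ≫ c ≫ eqToHom hY.symm)).comp e' (zero_add i) := by
  subst hX hZ hY hW
  simp [extTransport]

lemma comp_mk₀_inv_eq {X Y Z W : C} {i : ℕ} {e : Ext X Z i} {e' : Ext Y W i} (φ : Z ≅ W)
    (ψ : X ≅ Y)
    (h : e.comp (Ext.mk₀ φ.hom) (add_zero i) = (Ext.mk₀ ψ.hom).comp e' (zero_add i)) :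
    e'.comp (Ext.mk₀ φ.inv) (add_zero i) = (Ext.mk₀ ψ.inv).comp e (zero_add i) := by
  have he' : e' = (Ext.mk₀ ψ.inv).comp (e.comp (Ext.mk₀ φ.hom) (add_zero i)) (zero_add i) := by
    simp [h]
  rw [he']
  simp [Ext.comp_assoc_of_third_deg_zero]

end Rigid

namespace ExactExtension

variable {n : ℕ} (T U : ExactExtension C n)

section Differentials

/-- The short exact sequence `0 ⟶ K i ⟶ Y (i + 1) ⟶ K (i + 1) ⟶ 0`. -/
abbrev syzygySequence (i : ℕ) : ShortComplex C :=
  ShortComplex.mk (T.ι i) (T.π (i + 1)) (T.zero i)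

/-- The projection of `Y i` onto the syzygy `K i`. For `i = 0` it is the identification
`Y 0 = K 0` and not the field `π 0`, which carries no information. -/
def proj : ∀ i, T.Y i ⟶ T.K i
  | 0 => eqToHom T.hK0.symm
  | i + 1 => T.π (i + 1)

instance epi_proj : ∀ i, Epi (T.proj i)
  | 0 => inferInstanceAs (Epi (eqToHom T.hK0.symm))
  | i + 1 => (T.shortExact i).epi_g

variable {T} in
lemma d_eq_proj_comp_ι {i : ℕ} (hi : i < n) : T.d i = T.proj i ≫ T.ι i := by
  cases i with
  | zero => simp [proj, ← T.d0_eq]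
  | succ i => exact T.dmid_eq _ (by lia) hi

lemma d_last_eq (hn : 1 ≤ n) : T.d n = T.proj n ≫ eqToHom T.hKm := by
  obtain ⟨m, rfl⟩ := Nat.exists_eq_add_of_le' hn
  exact T.dlast_eq

lemma epi_d_last (hn : 1 ≤ n) : Epi (T.d n) := by
  rw [T.d_last_eq hn]
  infer_instance

variable {T} in
lemma d_comp_d {i : ℕ} (hi : i < n) : T.d i ≫ T.d (i + 1) = 0 := by
  have hι : T.ι i ≫ T.proj (i + 1) = 0 := T.zero i
  rw [d_eq_proj_comp_ι hi]
  rcases (Nat.succ_le_of_lt hi).lt_or_eq with hlt | rfl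
  · rw [d_eq_proj_comp_ι hlt, Category.assoc, reassoc_of% hι, zero_comp, comp_zero]
  · rw [T.d_last_eq (by lia), Category.assoc, reassoc_of% hι, zero_comp, comp_zero]

end Differentials

section Ext

variable [HasExt.{w} C] {T U}

lemma subsingleton_ext_K {Z : C} (hZ : ∀ i ≤ n, ExtVanishing.{w} n (T.Y (i + 1)) Z) {i j : ℕ}
    (h₁ : 1 ≤ i) (hij : i < j) (hj : j ≤ n) : Subsingleton (Ext (T.K j) Z i) := by
  induction hj using Nat.decreasingInduction generalizing i with
  | self =>
    rw [T.hKm]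
    exact hZ n le_rfl i h₁ hij
  | of_succ j hj ih =>
    refine subsingleton_of_forall_eq 0 fun e => ?_
    have := ih (i := i + 1) (by lia) (by lia)
    have := hZ j hj.le i h₁ (by lia)
    obtain ⟨e', rfl⟩ := Ext.contravariant_sequence_exact₁ (T.shortExact j) Z e (add_comm 1 i)
      (Subsingleton.elim _ _)
    rw [Subsingleton.elim e' 0, Ext.comp_zero]

lemma exists_ι_comp_eq {Z : C} (hZ : ∀ i ≤ n, ExtVanishing.{w} n (T.Y (i + 1)) Z) {j : ℕ}
    (h₁ : 1 ≤ j) (hj : j < n) (a : T.K j ⟶ Z) : ∃ b : T.Y (j + 1) ⟶ Z, T.ι j ≫ b = a := by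
  have := subsingleton_ext_K hZ le_rfl (Nat.lt_succ_of_le h₁) hj
  exact exists_f_comp_eq_of_extClass_comp_eq_zero (T.shortExact j) (Subsingleton.elim _ _)

lemma exists_d_comp_eq {Z : C} (hZ : ∀ i ≤ n, ExtVanishing.{w} n (T.Y (i + 1)) Z) {j : ℕ}
    (hj : j < n) {p : T.Y (j + 1) ⟶ Z} (hp : T.d j ≫ p = 0) :
    ∃ s : T.Y (j + 2) ⟶ Z, T.d (j + 1) ≫ s = p := by
  have hιp : T.ι j ≫ p = 0 := by
    rw [← cancel_epi (T.proj j), comp_zero, ← Category.assoc, ← d_eq_proj_comp_ι hj, hp]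
  have : Epi (T.syzygySequence j).g := (T.shortExact j).epi_g
  obtain ⟨c, hc⟩ := (T.shortExact j).exact.desc' p hιp
  change T.proj (j + 1) ≫ c = p at hc
  rcases (Nat.succ_le_of_lt hj).lt_or_eq with hlt | rfl
  · obtain ⟨s, hs⟩ := exists_ι_comp_eq hZ (by lia) hlt c
    exact ⟨s, by rw [d_eq_proj_comp_ι hlt, Category.assoc, hs, hc]⟩
  · exact ⟨eqToHom T.hKm.symm ≫ c, by simp [T.d_last_eq, hc]⟩

lemma chainClass_one : T.chainClass 1 = (T.shortExact 0).extClass := by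
  simp [chainClass]

lemma chainClass_one_comp_eq_zero {Z : C}
    (hZ : ∀ i ≤ n, ExtVanishing.{w} n (T.Y (i + 1)) Z) {a : T.K 0 ⟶ Z} {j : ℕ} (h₁ : 1 ≤ j)
    (hj : j ≤ n) (h : (T.chainClass j).comp (Ext.mk₀ a) (add_zero j) = 0) :
    (T.chainClass 1).comp (Ext.mk₀ a) (add_zero 1) = 0 := by
  induction j, h₁ using Nat.le_induction with
  | base => exact h
  | succ j h₁ ih =>
    rw [chainClass, Ext.comp_assoc_of_third_deg_zero] at h
    have := hZ j (by lia) j h₁ hj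
    obtain ⟨e, he⟩ := Ext.contravariant_sequence_exact₁ (T.shortExact j) Z _ _ h
    exact ih (by lia) (by rw [← he, Subsingleton.elim e 0, Ext.comp_zero])

lemma comp_chainClass_injective {W : C} (hW : ∀ i < n, ExtVanishing.{w} n W (T.Y (i + 1)))
    {i j l : ℕ} (h₁ : 1 ≤ i) (h : i + j = l) (hl : l ≤ n) :
    Function.Injective fun e : Ext W (T.K j) i => e.comp (T.chainClass j) h := by
  suffices ∀ e : Ext W (T.K j) i, e.comp (T.chainClass j) h = 0 → e = 0 from
    (injective_iff_map_eq_zero ((T.chainClass j).postcomp W h)).2 this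
  intro e he
  induction j generalizing i with
  | zero =>
    obtain rfl : i = l := h
    simpa [chainClass] using he
  | succ j ih =>
    rw [chainClass, ← Ext.comp_assoc (a₁₂ := i + 1) _ _ _ rfl (by lia) (by lia)] at he
    obtain ⟨e', rfl⟩ := Ext.covariant_sequence_exact₃ W (T.shortExact j) e rfl
      (ih (by lia) (by lia) _ he)
    have := hW j (by lia) i h₁ (by lia)
    rw [Subsingleton.elim e' 0, Ext.zero_comp]

lemma chainClass_comp_ι_zero {j : ℕ} (h₁ : 1 ≤ j) :
    (T.chainClass j).comp (Ext.mk₀ (T.ι 0)) (add_zero j) = 0 := by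
  induction j, h₁ using Nat.le_induction with
  | base => rw [chainClass_one, (T.shortExact 0).extClass_comp]
  | succ j _ ih => rw [chainClass, Ext.comp_assoc_of_third_deg_zero, ih, Ext.comp_zero]

lemma chainClass_succ_comp_eq {k₀ : T.K 0 ⟶ U.K 0} {j : ℕ}
    (φ : T.syzygySequence j ⟶ U.syzygySequence j)
    (h : (T.chainClass j).comp (Ext.mk₀ k₀) (add_zero j) =
      (Ext.mk₀ φ.τ₁).comp (U.chainClass j) (zero_add j)) :
    (T.chainClass (j + 1)).comp (Ext.mk₀ k₀) (add_zero (j + 1)) =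
      (Ext.mk₀ φ.τ₃).comp (U.chainClass (j + 1)) (zero_add (j + 1)) := by
  rw [chainClass, chainClass, Ext.comp_assoc_of_third_deg_zero, h,
    ← Ext.comp_assoc_of_second_deg_zero,
    ShortComplex.ShortExact.extClass_naturality (T.shortExact j) (U.shortExact j) φ,
    Ext.comp_assoc _ _ _ _ _ (by lia)]

end Ext

section CochainMaps

/-- `f` is a morphism of complexes `T ⟶ U` in the relevant degrees `0, …, n + 1`. -/
def IsCochainMap (f : ∀ i, T.Y i ⟶ U.Y i) : Prop :=
  ∀ i ≤ n, T.d i ≫ f (i + 1) = f i ≫ U.d i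

/-- `p` is null-homotopic in the relevant degrees `0, …, n + 1`, the contracting homotopy being
zero outside of them. -/
def IsNullHomotopic (p : ∀ i, T.Y i ⟶ U.Y i) : Prop :=
  ∃ s : ∀ i, T.Y (i + 1) ⟶ U.Y i,
    p 0 = T.d 0 ≫ s 0 ∧
    (∀ i < n, p (i + 1) = T.d (i + 1) ≫ s (i + 1) + s i ≫ U.d i) ∧
    p (n + 1) = s n ≫ U.d n

variable {T U}

lemma IsCochainMap.comp_sub_id {f : ∀ i, T.Y i ⟶ U.Y i} {g : ∀ i, U.Y i ⟶ T.Y i}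
    (hf : IsCochainMap T U f) (hg : IsCochainMap U T g) :
    IsCochainMap T T fun i => f i ≫ g i - 𝟙 (T.Y i) := fun i hi => by
  simp only [Preadditive.comp_sub, Preadditive.sub_comp, Category.comp_id, Category.id_comp,
    Category.assoc, ← hg i hi, reassoc_of% hf i hi]

lemma exists_isCochainMap_of_syzygy_maps (hn : 1 ≤ n) {k : ∀ i, T.K i ⟶ U.K i}
    (hk : ∀ i < n, ∃ φ : T.syzygySequence i ⟶ U.syzygySequence i,
      φ.τ₁ = k i ∧ φ.τ₃ = k (i + 1)) :
    ∃ f, IsCochainMap T U f ∧ f 0 = eqToHom T.hK0.symm ≫ k 0 ≫ eqToHom U.hK0 ∧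
      f (n + 1) = eqToHom T.hKm.symm ≫ k n ≫ eqToHom U.hKm := by
  obtain ⟨f, hf₀, hf_last, hf⟩ := exists_seq_of_step_of_last (m := n)
    (α := fun i => T.Y i ⟶ U.Y i)
    (P := fun i b => b ≫ U.proj i = T.proj i ≫ k i)
    (R := fun i b b' => T.d i ≫ b' = b ≫ U.d i)
    (x := eqToHom T.hK0.symm ≫ k 0 ≫ eqToHom U.hK0)
    (z := eqToHom T.hKm.symm ≫ k n ≫ eqToHom U.hKm)
    (by simp [proj])
    (fun i hi b hb => by
      obtain ⟨φ, hφ₁, hφ₃⟩ := hk i hi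
      have hι : T.ι i ≫ φ.τ₂ = k i ≫ U.ι i := by rw [← hφ₁]; exact φ.comm₁₂.symm
      refine ⟨φ.τ₂, by rw [← hφ₃]; exact φ.comm₂₃, ?_⟩
      rw [d_eq_proj_comp_ι hi, d_eq_proj_comp_ι hi, Category.assoc, hι, reassoc_of% hb])
    (fun b hb => by simp [d_last_eq _ hn, reassoc_of% hb])
  exact ⟨f, hf, hf₀, hf_last⟩

variable [HasExt.{w} C]

lemma exists_syzygy_hom {k₀ : T.K 0 ⟶ U.K 0} {kₙ : T.K n ⟶ U.K n}
    (hTU : ∀ i ≤ n, ∀ j < n, ExtVanishing.{w} n (T.Y (i + 1)) (U.Y (j + 1)))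
    (hclass : (T.chainClass n).comp (Ext.mk₀ k₀) (add_zero n) =
      (Ext.mk₀ kₙ).comp (U.chainClass n) (zero_add n))
    {i : ℕ} (hi : i < n) {k : T.K i ⟶ U.K i}
    (hk : (T.chainClass i).comp (Ext.mk₀ k₀) (add_zero i) =
      (Ext.mk₀ k).comp (U.chainClass i) (zero_add i)) :
    ∃ φ : T.syzygySequence i ⟶ U.syzygySequence i, φ.τ₁ = k := by
  have hU := fun j hj => hTU j hj i hi
  obtain ⟨b, hb⟩ : ∃ b : T.Y (i + 1) ⟶ U.Y (i + 1), T.ι i ≫ b = k ≫ U.ι i := by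
    rcases Nat.eq_zero_or_pos i with rfl | hpos
    · obtain rfl : k₀ = k := (Ext.mk₀_bijective _ _).injective (by simpa [chainClass] using hk)
      refine exists_f_comp_eq_of_extClass_comp_eq_zero (T.shortExact 0) ?_
      rw [← chainClass_one]
      refine chainClass_one_comp_eq_zero hU hi le_rfl ?_
      rw [← Ext.mk₀_comp_mk₀, ← Ext.comp_assoc_of_third_deg_zero, hclass,
        Ext.comp_assoc_of_third_deg_zero, chainClass_comp_ι_zero hi, Ext.comp_zero]
    · exact exists_ι_comp_eq hU hpos hi _
  obtain ⟨φ, hφ, -⟩ := exists_hom_of_f_comp_eq (S' := U.syzygySequence i) (T.shortExact i) hb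
  exact ⟨φ, hφ⟩

lemma exists_last_syzygy_hom {m : ℕ} {T U : ExactExtension C (m + 1)}
    (hU : ∀ j ≤ m, ExtVanishing.{w} (m + 1) (T.Y (m + 2)) (U.Y (j + 1)))
    {k₀ : T.K 0 ⟶ U.K 0} {k : T.K m ⟶ U.K m} {k' : T.K (m + 1) ⟶ U.K (m + 1)}
    (hclass : (T.chainClass (m + 1)).comp (Ext.mk₀ k₀) (add_zero (m + 1)) =
      (Ext.mk₀ k').comp (U.chainClass (m + 1)) (zero_add (m + 1)))
    (hk : (T.chainClass m).comp (Ext.mk₀ k₀) (add_zero m) =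
      (Ext.mk₀ k).comp (U.chainClass m) (zero_add m)) :
    ∃ φ : T.syzygySequence m ⟶ U.syzygySequence m, φ.τ₁ = k ∧ φ.τ₃ = k' := by
  refine exists_hom_of_extClass_comp_eq (T.shortExact m) (U.shortExact m) ?_
  have hK : ∀ j < m + 1, ExtVanishing.{w} (m + 1) (T.K (m + 1)) (U.Y (j + 1)) := fun j hj => by
    rw [T.hKm]
    exact hU j (by lia)
  refine comp_chainClass_injective hK le_rfl (add_comm 1 m) le_rfl ?_
  change ((T.shortExact m).extClass.comp (Ext.mk₀ k) _).comp (U.chainClass m) _ =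
    ((Ext.mk₀ k').comp (U.shortExact m).extClass _).comp (U.chainClass m) _
  rw [Ext.comp_assoc_of_second_deg_zero, ← hk, ← Ext.comp_assoc_of_third_deg_zero]
  exact hclass.trans (Ext.comp_assoc _ _ _ _ _ (by lia)).symm

lemma exists_isCochainMap (hn : 1 ≤ n)
    (hTU : ∀ i ≤ n, ∀ j < n, ExtVanishing.{w} n (T.Y (i + 1)) (U.Y (j + 1)))
    {a : T.Y 0 ⟶ U.Y 0} {c : T.Y (n + 1) ⟶ U.Y (n + 1)}
    (hclass : T.extClass.comp (Ext.mk₀ a) (add_zero n) =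
      (Ext.mk₀ c).comp U.extClass (zero_add n)) :
    ∃ f, IsCochainMap T U f ∧ f 0 = a ∧ f (n + 1) = c := by
  replace hclass := (extTransport_comp_eq_iff T.hKm T.hK0 U.hKm U.hK0).1 hclass
  obtain ⟨m, rfl⟩ := Nat.exists_eq_add_of_le' hn
  obtain ⟨k, hk₀, hk_last, hk⟩ := exists_seq_of_step_of_last (m := m)
    (α := fun i => T.K i ⟶ U.K i)
    (P := fun i k => (T.chainClass i).comp (Ext.mk₀ (eqToHom T.hK0 ≫ a ≫ eqToHom U.hK0.symm))
      (add_zero i) = (Ext.mk₀ k).comp (U.chainClass i) (zero_add i))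
    (R := fun i k k' => ∃ φ : T.syzygySequence i ⟶ U.syzygySequence i, φ.τ₁ = k ∧ φ.τ₃ = k')
    (x := eqToHom T.hK0 ≫ a ≫ eqToHom U.hK0.symm) (by simp [chainClass])
    (fun i hi k hk => by
      obtain ⟨φ, rfl⟩ := exists_syzygy_hom hTU hclass (hi.trans m.lt_succ_self) hk
      exact ⟨φ.τ₃, chainClass_succ_comp_eq φ hk, φ, rfl, rfl⟩)
    (fun k hk => exists_last_syzygy_hom (fun j hj => hTU _ le_rfl j (by lia)) hclass hk)
  obtain ⟨f, hf, hf₀, hf_last⟩ :=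
    exists_isCochainMap_of_syzygy_maps hn fun i hi => hk i (by lia)
  exact ⟨f, hf, by simp [hf₀, hk₀], by simp [hf_last, hk_last]⟩

lemma IsCochainMap.isNullHomotopic (hn : 1 ≤ n)
    (hTU : ∀ i ≤ n, ∀ j < n, ExtVanishing.{w} n (T.Y (i + 1)) (U.Y (j + 1)))
    {p : ∀ i, T.Y i ⟶ U.Y i} (hp : IsCochainMap T U p) (hp₀ : p 0 = 0) :
    IsNullHomotopic T U p := by
  obtain ⟨s, hs₀, hs_comm, hs⟩ := exists_seq_of_step (n := n)
    (α := fun i => T.Y (i + 1) ⟶ U.Y i)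
    (P := fun i s => T.d i ≫ (p (i + 1) - s ≫ U.d i) = 0)
    (R := fun i s s' => p (i + 1) = T.d (i + 1) ≫ s' + s ≫ U.d i)
    (x := 0) (by simp [hp 0 (by lia), hp₀])
    (fun i hi s hs => by
      obtain ⟨s', hs'⟩ := exists_d_comp_eq (fun j hj => hTU j hj i hi) hi hs
      refine ⟨s', ?_, by rw [hs', sub_add_cancel]⟩
      rw [Preadditive.comp_sub, reassoc_of% hs', hp (i + 1) hi, Preadditive.sub_comp,
        Category.assoc, d_comp_d hi, comp_zero, sub_zero, sub_self])
  have := T.epi_d_last hn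
  refine ⟨s, by rw [hs₀, hp₀, comp_zero], hs, ?_⟩
  rw [← sub_eq_zero, ← cancel_epi (T.d n), hs_comm n le_rfl, comp_zero]

end CochainMaps

end ExactExtension

open ExactExtension

theorem homotopy_equivalent_of_eq_extClass_general [HasExt.{w} C] {n : ℕ} (hn : 1 ≤ n)
    {M : Set C} (hM : IsRigid.{w} n M) (T U : ExactExtension C n)
    (hT : ∀ i ≤ n + 1, T.Y i ∈ M) (hU : ∀ i ≤ n + 1, U.Y i ∈ M)
    (φ₀ : T.Y 0 ≅ U.Y 0) (φ₁ : T.Y (n + 1) ≅ U.Y (n + 1))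
    (hclass : T.extClass.comp (Ext.mk₀ φ₀.hom) (add_zero n) =
      (Ext.mk₀ φ₁.hom).comp U.extClass (zero_add n)) :
    ∃ f, IsCochainMap T U f ∧ f 0 = φ₀.hom ∧ f (n + 1) = φ₁.hom ∧
      ∃ g, IsCochainMap U T g ∧
        IsNullHomotopic T T (fun i => f i ≫ g i - 𝟙 (T.Y i)) ∧
        IsNullHomotopic U U (fun i => g i ≫ f i - 𝟙 (U.Y i)) := by
  have vanishing {A B : ExactExtension C n} (hA : ∀ i ≤ n + 1, A.Y i ∈ M)
      (hB : ∀ i ≤ n + 1, B.Y i ∈ M) (i : ℕ) (hi : i ≤ n) (j : ℕ) (hj : j < n) :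
      ExtVanishing.{w} n (A.Y (i + 1)) (B.Y (j + 1)) :=
    hM _ (hA _ (by lia)) _ (hB _ (by lia))
  obtain ⟨f, hf, hf₀, hf₁⟩ := exists_isCochainMap hn (vanishing hT hU) hclass
  obtain ⟨g, hg, hg₀, -⟩ := exists_isCochainMap hn (vanishing hU hT)
    (comp_mk₀_inv_eq φ₀ φ₁ hclass)
  exact ⟨f, hf, hf₀, hf₁, g, hg,
    (hf.comp_sub_id hg).isNullHomotopic hn (vanishing hT hT) (by simp [hf₀, hg₀]),
    (hg.comp_sub_id hf).isNullHomotopic hn (vanishing hU hU) (by simp [hf₀, hg₀])⟩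

/-- Let `𝓔` be an abelian category, `n ≥ 1`, `M` an `n`-cluster tilting
subcategory of `𝓔`, and let `T`, `U` be two `n`-exact sequences in `M` with the same end terms
and equal Yoneda classes in `Extⁿ(X^{n+1},X⁰)`.  Then `T` and `U` are homotopy equivalent via a
morphism of complexes which is the identity on both end terms. -/
theorem homotopy_equivalent_of_eq_extClass
    {C : Type u} [Category.{v} C] [Abelian C] [HasExt.{w} C]
    (n : ℕ) (hn : 1 ≤ n) (M : Set C) (hM : IsNClusterTilting n M)
    (T U : ExactExtension C n)
    (hT : ∀ i ≤ n + 1, T.Y i ∈ M) (hU : ∀ i ≤ n + 1, U.Y i ∈ M)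
    (e0 : T.Y 0 = U.Y 0) (e1 : T.Y (n + 1) = U.Y (n + 1))
    (hclass : extTransport T.extClass e1 e0 = U.extClass) :
    ∃ f : ∀ i, T.Y i ⟶ U.Y i,
      (∀ i ≤ n, T.d i ≫ f (i + 1) = f i ≫ U.d i) ∧
      f 0 = eqToHom e0 ∧ f (n + 1) = eqToHom e1 ∧
      ∃ g : ∀ i, U.Y i ⟶ T.Y i,
        (∀ i ≤ n, U.d i ≫ g (i + 1) = g i ≫ T.d i) ∧
        (∃ s : ∀ i, T.Y (i + 1) ⟶ T.Y i,
          f 0 ≫ g 0 - 𝟙 (T.Y 0) = T.d 0 ≫ s 0 ∧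
          (∀ i < n, f (i + 1) ≫ g (i + 1) - 𝟙 (T.Y (i + 1)) =
            T.d (i + 1) ≫ s (i + 1) + s i ≫ T.d i) ∧
          f (n + 1) ≫ g (n + 1) - 𝟙 (T.Y (n + 1)) = s n ≫ T.d n) ∧
        (∃ t : ∀ i, U.Y (i + 1) ⟶ U.Y i,
          g 0 ≫ f 0 - 𝟙 (U.Y 0) = U.d 0 ≫ t 0 ∧
          (∀ i < n, g (i + 1) ≫ f (i + 1) - 𝟙 (U.Y (i + 1)) =
            U.d (i + 1) ≫ t (i + 1) + t i ≫ U.d i) ∧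
          g (n + 1) ≫ f (n + 1) - 𝟙 (U.Y (n + 1)) = t n ≫ U.d n) :=
  homotopy_equivalent_of_eq_extClass_general hn hM.isRigid T U hT hU (eqToIso e0) (eqToIso e1)
    ((extTransport_eq_iff e1 e0).1 hclass)

end NZPaper
end
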